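/- Let c be a negative integer and suppose that c = L_n − 2^x·3^y = L_{n₁} − 2^{x₁}·3^{y₁} = L_{n₂} − 2^{x₂}·3^{y₂} for nonnegative integers with n > n₁ > n₂ and n₁ > 500. Then n − n₁ < 8·10^13 · (log n)². -/

import Mathlib

/-- The Lucas sequence: L 0 = 2, L 1 = 1, L (n+2) = L (n+1) + L n. -/
def lucas : ℕ → ℤ
  | 0 => 2
  | 1 => 1
  | n + 2 => lucas (n + 1) + lucas n

/-!
Suppose that `x log 2 + y log 3 + z log φ` is extremely small for integers `x`, `y`, `z`, not all
zero. Two integer forms that vanish at `(x, y, z)` then nearly span the form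
`μ ↦ μ₀ log 2 + μ₁ log 3 + μ₂ log φ`, so that differentiating `∑ p μ (2 ^ μ₀ 3 ^ μ₁ φ ^ μ₂) ^ s`
in `s` amounts to weighting `p μ` by polynomials in these integer forms. Siegel's lemma makes many
such moments vanish at odd integers `s`; Hermite interpolation and the maximum principle carry the
smallness over to half-integral powers; Liouville's inequality in `ℤ[φ, √2, √3, √φ]` turns
smallness into vanishing. The values vanish separately on each class of `μ` modulo `2`, because
`√2`, `√3` and `√φ` are independent, and restricting to one class halves the exponents while
doubling the number of zeros. Repeating this leaves a single exponent, which is absurd.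

The resulting lower bound for linear forms is used twice. If `|c|` were much larger than `φ ^ n₁`,
the two smaller solutions would give two products of powers of `2` and `3` that are too close to
each other; so `c` is bounded, and if `n` were far above `n₁`, the largest solution would make
`2 ^ x * 3 ^ y` too close to `φ ^ n`.
-/

section LiouvilleFamily

open QuadraticAlgebra

variable {O K ι : Type*} [CommRing O]

/-- A finite family of ring homomorphisms into a normed field for which Liouville's inequality
holds: the values of a nonzero element have product at least `1` in absolute value. -/
def LiouvilleFamily [NormedField K] [Fintype ι] (σ : ι → O →+* K) : Prop :=
  ∀ x ≠ 0, 1 ≤ ∏ i, ‖σ i x‖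

theorem liouvilleFamily_intCast : LiouvilleFamily fun _ : Unit => Int.castRingHom ℝ := by
  intro x hx
  simpa [← Int.cast_abs] using mod_cast Int.one_le_abs hx

/-- The ring homomorphism from `O[ω]`, where `ω ^ 2 = a + b * ω`, that extends `σ` and sends `ω` to
a given root `r`. -/
def quadraticLift [CommRing K] {a b : O} (σ : O →+* K) (r : K) (hr : r * r = σ a + σ b * r) :
    QuadraticAlgebra O a b →+* K :=
  letI := σ.toAlgebra
  (QuadraticAlgebra.lift ⟨r, by simpa [Algebra.smul_def, RingHom.algebraMap_toAlgebra] using hr⟩ :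
    QuadraticAlgebra O a b →ₐ[O] K)

@[simp]
theorem quadraticLift_apply [CommRing K] {a b : O} (σ : O →+* K) (r : K)
    (hr : r * r = σ a + σ b * r) (z : QuadraticAlgebra O a b) :
    quadraticLift σ r hr z = σ z.re + σ z.im * r := by
  let _ := σ.toAlgebra
  simp [quadraticLift, QuadraticAlgebra.lift, Algebra.smul_def, RingHom.algebraMap_toAlgebra]

/-- The extensions of the members of `σ` to `O[ω]`: the Boolean says whether `ω` goes to the chosen
root `r i` or to the conjugate root. -/
def quadraticLiftFamily [CommRing K] {a b : O} (σ : ι → O →+* K) (r : ι → K)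
    (hr : ∀ i, r i * r i = σ i a + σ i b * r i) :
    ι × Bool → QuadraticAlgebra O a b →+* K
  | (i, true) => quadraticLift (σ i) (r i) (hr i)
  | (i, false) => quadraticLift (σ i) (σ i b - r i) (by linear_combination hr i)

variable [NormedField K] [Fintype ι] {σ : ι → O →+* K}

theorem LiouvilleFamily.quadraticLiftFamily (hσ : LiouvilleFamily σ) {a b : O}
    (hnorm : ∀ z : QuadraticAlgebra O a b, norm z = 0 → z = 0) (r : ι → K)
    (hr : ∀ i, r i * r i = σ i a + σ i b * r i) :
    LiouvilleFamily (quadraticLiftFamily σ r hr) := by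
  intro z hz
  refine (hσ _ (mt (hnorm z) hz)).trans_eq ?_
  rw [Fintype.prod_prod_type]
  refine Finset.prod_congr rfl fun i _ => ?_
  rw [Fintype.prod_bool, ← norm_mul]
  congr 1
  simp only [_root_.quadraticLiftFamily, quadraticLift_apply, norm_def, map_sub, map_add, map_mul]
  linear_combination (σ i z.im) ^ 2 * hr i

theorem LiouvilleFamily.injective (hσ : LiouvilleFamily σ) (i : ι) : Function.Injective (σ i) := by
  refine (injective_iff_map_eq_zero _).mpr fun x hx => by_contra fun hne => ?_
  have := hσ x hne
  rw [Finset.prod_eq_zero (Finset.mem_univ i) (by rw [hx, _root_.norm_zero])] at this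
  norm_num at this

theorem LiouvilleFamily.ofReal {σ : ι → O →+* ℝ} (hσ : LiouvilleFamily σ) :
    LiouvilleFamily fun i => Complex.ofRealHom.comp (σ i) := fun x hx => by
  simpa using hσ x hx

theorem LiouvilleFamily.one_le_norm_mul_pow (hσ : LiouvilleFamily σ) {x : O} (hx : x ≠ 0) {M : ℝ}
    (hM : ∀ i, ‖σ i x‖ ≤ M) (i : ι) : 1 ≤ ‖σ i x‖ * M ^ (Fintype.card ι - 1) := by
  classical
  calc 1 ≤ ‖σ i x‖ * ∏ j ∈ Finset.univ.erase i, ‖σ j x‖ := by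
        rw [Finset.mul_prod_erase _ (fun j => ‖σ j x‖) (Finset.mem_univ i)]
        exact hσ x hx
    _ ≤ ‖σ i x‖ * M ^ (Fintype.card ι - 1) := by
        gcongr
        refine (Finset.prod_le_prod (fun _ _ => norm_nonneg _) fun j _ => hM j).trans_eq ?_
        rw [Finset.prod_const, Finset.card_erase_of_mem (Finset.mem_univ i), Finset.card_univ]

end LiouvilleFamily

section SqrtExtension

open QuadraticAlgebra

variable {O : Type*} [CommRing O]

theorem eq_zero_of_norm_eq_zero_of_isRadical [IsDomain O] [WfDvdMonoid O] {p : O} (hp0 : p ≠ 0)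
    (hpu : ¬IsUnit p) (hp : IsRadical p) (z : QuadraticAlgebra O p 0) (hz : norm z = 0) :
    z = 0 := by
  suffices descent : ∀ b a : O, a ^ 2 = p * b ^ 2 → b = 0 by
    have hsq : z.re ^ 2 = p * z.im ^ 2 := by
      rw [norm_def] at hz
      linear_combination hz
    have him := descent _ _ hsq
    refine QuadraticAlgebra.ext ?_ him
    simpa [him] using hsq
  intro b
  induction b using (wellFounded_dvdNotUnit (α := O)).induction with
  | _ b ih =>
    intro a hab
    by_contra hb
    obtain ⟨a', rfl⟩ := hp 2 a ⟨_, hab⟩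
    have hab' : p * a' ^ 2 = b ^ 2 := mul_left_cancel₀ hp0 (by rw [← hab]; ring)
    obtain ⟨b', rfl⟩ := hp 2 b ⟨_, hab'.symm⟩
    have hab'' : a' ^ 2 = p * b' ^ 2 := mul_left_cancel₀ hp0 (by rw [hab']; ring)
    have hb' : b' ≠ 0 := right_ne_zero_of_mul hb
    exact hb' (ih b' ⟨hb', p, hpu, mul_comm p b'⟩ a' hab'')

theorem eq_zero_of_norm_eq_zero_of_map_neg (f : O →+* ℝ) (hf : Function.Injective f) {d : O}
    (hd : f d < 0) (z : QuadraticAlgebra O d 0) (hz : norm z = 0) : z = 0 := by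
  have hsum : f z.re ^ 2 + -f d * f z.im ^ 2 = 0 := by
    simpa [norm_def, ← sub_eq_add_neg, pow_two, mul_assoc] using congrArg f hz
  obtain ⟨hre, him⟩ := (add_eq_zero_iff_of_nonneg (sq_nonneg _)
    (mul_nonneg (neg_pos.mpr hd).le (sq_nonneg _))).mp hsum
  have him' : f z.im ^ 2 = 0 := (mul_eq_zero.mp him).resolve_left (neg_pos.mpr hd).ne'
  exact QuadraticAlgebra.ext ((map_eq_zero_iff f hf).mp (sq_eq_zero_iff.mp hre))
    ((map_eq_zero_iff f hf).mp (sq_eq_zero_iff.mp him'))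

theorem omega_pow_add_two_mul (d : O) (e k : ℕ) :
    (ω : QuadraticAlgebra O d 0) ^ (e + 2 * k) = QuadraticAlgebra.C (d ^ k) * ω ^ e := by
  rw [pow_add, pow_mul, pow_two, omega_mul_omega_eq_mk, C_pow, mul_comm]
  rfl

theorem sum_mul_pow_div_two_eq_zero {α : Type*} {d : O} (S : Finset α) (x : α → O) (m : α → ℕ)
    (h : ∑ a ∈ S, QuadraticAlgebra.C (x a) * (ω : QuadraticAlgebra O d 0) ^ m a = 0)
    {e : ℕ} (he : e < 2) :
    ∑ a ∈ S with m a % 2 = e, x a * d ^ (m a / 2) = 0 := by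
  have hterm (a : α) : QuadraticAlgebra.C (x a) * (ω : QuadraticAlgebra O d 0) ^ m a =
      QuadraticAlgebra.C (x a * d ^ (m a / 2)) * ω ^ (m a % 2) := by
    rw [C_mul, mul_assoc, ← omega_pow_add_two_mul, Nat.mod_add_div]
  simp only [hterm] at h
  rw [Finset.sum_filter]
  interval_cases e
  · refine Eq.trans (Finset.sum_congr rfl fun a _ => ?_)
      ((map_sum (reₗ (R := O) (a := d) (b := 0)) _ _).symm.trans (congrArg _ h))
    generalize x a * d ^ (m a / 2) = y
    rcases Nat.mod_two_eq_zero_or_one (m a) with ha | ha <;> simp [ha, reₗ]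
  · refine Eq.trans (Finset.sum_congr rfl fun a _ => ?_)
      ((map_sum (imₗ (R := O) (a := d) (b := 0)) _ _).symm.trans (congrArg _ h))
    generalize x a * d ^ (m a / 2) = y
    rcases Nat.mod_two_eq_zero_or_one (m a) with ha | ha <;> simp [ha, imₗ]

end SqrtExtension

section GoldenKummer

open QuadraticAlgebra Real goldenRatio

/-- The ring of integers `ℤ[φ]` of `ℚ(√5)`, with `ω` as the golden ratio `φ`. -/
abbrev GoldenInt : Type := QuadraticAlgebra ℤ 1 1

/-- The ring `ℤ[φ, √2]`. -/
abbrev GoldenSqrtTwo : Type := QuadraticAlgebra GoldenInt 2 0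

/-- The ring `ℤ[φ, √2, √3]`. -/
abbrev GoldenSqrtTwoThree : Type := QuadraticAlgebra GoldenSqrtTwo 3 0

/-- The ring `ℤ[φ, √2, √3, √φ]`, in which all half-integral powers of `2`, `3` and `φ` live. -/
abbrev GoldenKummer : Type :=
  QuadraticAlgebra GoldenSqrtTwoThree (.C (.C (ω : GoldenInt))) 0

theorem ofNat_dvd_iff {O : Type*} [CommRing O] {a b : O} (k : ℕ) [k.AtLeastTwo]
    (z : QuadraticAlgebra O a b) :
    (ofNat(k) : QuadraticAlgebra O a b) ∣ z ↔ (ofNat(k) : O) ∣ z.re ∧ (ofNat(k) : O) ∣ z.im := by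
  rw [← algebraMap_dvd_iff, map_ofNat]

theorem isRadical_two : IsRadical (2 : GoldenInt) := by
  refine (isRadical_iff_pow_one_lt 2 one_lt_two).mpr fun z hz => ?_
  have hmod : ∀ u v : ZMod 2, u * u + v * v = 0 ∧ u * v + v * u + v * v = 0 → u = 0 ∧ v = 0 := by
    decide
  have hcast (k : ℤ) : (2 : ℤ) ∣ k ↔ (k : ZMod 2) = 0 :=
    (ZMod.intCast_zmod_eq_zero_iff_dvd k 2).symm
  rw [ofNat_dvd_iff, hcast, hcast] at hz ⊢
  simp only [pow_two, re_mul, im_mul, one_mul] at hz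
  push_cast at hz
  exact hmod _ _ hz

theorem isRadical_three : IsRadical (3 : GoldenSqrtTwo) := by
  refine (isRadical_iff_pow_one_lt 2 one_lt_two).mpr fun z hz => ?_
  have hmod : ∀ u v w x : ZMod 3,
      (u * u + v * v + (2 * w * w + 2 * x * x) = 0 ∧
        u * v + v * u + v * v + (2 * w * x + 2 * x * w + 2 * x * x) = 0) ∧
      u * w + v * x + (w * u + x * v) = 0 ∧
        u * x + v * w + v * x + (w * v + x * u + x * v) = 0 →
      (u = 0 ∧ v = 0) ∧ w = 0 ∧ x = 0 := by
    decide
  have hcast (k : ℤ) : (3 : ℤ) ∣ k ↔ (k : ZMod 3) = 0 :=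
    (ZMod.intCast_zmod_eq_zero_iff_dvd k 3).symm
  simp only [ofNat_dvd_iff, hcast] at hz ⊢
  simp only [pow_two, re_mul, im_mul, re_add, im_add, re_ofNat, im_ofNat, one_mul, zero_mul,
    mul_zero, add_zero] at hz
  push_cast at hz
  exact hmod _ _ _ _ hz

theorem goldenInt_eq_zero_of_norm_eq_zero (z : GoldenInt) (hz : norm z = 0) : z = 0 := by
  have hprod : ((z.re : ℝ) + φ * z.im) * (z.re + ψ * z.im) = 0 := by
    have hcast := congrArg (Int.cast (R := ℝ)) hz
    rw [norm_def] at hcast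
    push_cast at hcast
    linear_combination hcast + z.re * z.im * goldenRatio_add_goldenConj +
      (z.im : ℝ) ^ 2 * goldenRatio_mul_goldenConj
  have hirr {t : ℝ} (ht : Irrational t) (h : (z.re : ℝ) + t * z.im = 0) : z = 0 := by
    have him : z.im = 0 := by_contra fun him =>
      (ht.mul_intCast him).ne_int (-z.re) (by push_cast; linarith)
    exact QuadraticAlgebra.ext (by simpa [him] using h) him
  exact (mul_eq_zero.mp hprod).elim (hirr goldenRatio_irrational) (hirr goldenConj_irrational)

/-- The embeddings of `ℤ[φ]`. -/
noncomputable def goldenEmbedding : Unit × Bool → GoldenInt →+* ℝ :=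
  quadraticLiftFamily (fun _ => Int.castRingHom ℝ) (fun _ => φ) fun _ => by
    rw [← pow_two, goldenRatio_sq, map_one, one_mul, add_comm]

/-- The embeddings of `ℤ[φ, √2]`. -/
noncomputable def goldenSqrtTwoEmbedding : (Unit × Bool) × Bool → GoldenSqrtTwo →+* ℝ :=
  quadraticLiftFamily goldenEmbedding (fun _ => √2) fun i => by
    simpa using (map_ofNat (goldenEmbedding i) 2).symm

/-- The embeddings of `ℤ[φ, √2, √3]`. -/
noncomputable def goldenSqrtTwoThreeEmbedding :
    ((Unit × Bool) × Bool) × Bool → GoldenSqrtTwoThree →+* ℝ :=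
  quadraticLiftFamily goldenSqrtTwoEmbedding (fun _ => √3) fun i => by
    simpa using (map_ofNat (goldenSqrtTwoEmbedding i) 3).symm

theorem liouvilleFamily_goldenEmbedding : LiouvilleFamily goldenEmbedding :=
  liouvilleFamily_intCast.quadraticLiftFamily goldenInt_eq_zero_of_norm_eq_zero _ _

theorem liouvilleFamily_goldenSqrtTwoEmbedding : LiouvilleFamily goldenSqrtTwoEmbedding :=
  have := (liouvilleFamily_goldenEmbedding.injective ((), true)).isDomain
  liouvilleFamily_goldenEmbedding.quadraticLiftFamily
    (eq_zero_of_norm_eq_zero_of_isRadical (by decide)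
      (mt isUnit_iff_dvd_one.mp (by rw [ofNat_dvd_iff]; decide)) isRadical_two) _ _

theorem liouvilleFamily_goldenSqrtTwoThreeEmbedding :
    LiouvilleFamily goldenSqrtTwoThreeEmbedding :=
  have := (liouvilleFamily_goldenSqrtTwoEmbedding.injective (((), true), true)).isDomain
  have := IsNoetherianRing.of_finite ℤ GoldenInt
  have := IsNoetherianRing.of_finite GoldenInt GoldenSqrtTwo
  liouvilleFamily_goldenSqrtTwoEmbedding.quadraticLiftFamily
    (eq_zero_of_norm_eq_zero_of_isRadical (by decide)
      (mt isUnit_iff_dvd_one.mp (by simp only [ofNat_dvd_iff]; decide)) isRadical_three) _ _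

theorem goldenSqrtTwoThreeEmbedding_phi (i : ((Unit × Bool) × Bool) × Bool) :
    goldenSqrtTwoThreeEmbedding i (.C (.C (ω : GoldenInt))) = if i.1.1.2 then φ else ψ := by
  obtain ⟨⟨⟨_, _ | _⟩, _ | _⟩, _ | _⟩ := i <;>
    simp [goldenSqrtTwoThreeEmbedding, goldenSqrtTwoEmbedding, goldenEmbedding,
      quadraticLiftFamily, one_sub_goldenConj]

/-- A square root in `ℂ` of each conjugate of `φ`, positive at the identity embedding. -/
noncomputable def sqrtPhiConjugate (i : ((Unit × Bool) × Bool) × Bool) : ℂ :=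
  if i.1.1.2 then (√φ : ℝ) else Complex.I * (√(-ψ) : ℝ)

theorem sqrtPhiConjugate_mul_self (i : ((Unit × Bool) × Bool) × Bool) :
    sqrtPhiConjugate i * sqrtPhiConjugate i =
      goldenSqrtTwoThreeEmbedding i (.C (.C (ω : GoldenInt))) := by
  rw [goldenSqrtTwoThreeEmbedding_phi, sqrtPhiConjugate]
  split_ifs
  · rw [← Complex.ofReal_mul, mul_self_sqrt goldenRatio_pos.le]
  · rw [mul_mul_mul_comm, Complex.I_mul_I, ← Complex.ofReal_mul,
      mul_self_sqrt (neg_pos.mpr goldenConj_neg).le]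
    simp

/-- The embeddings of `ℤ[φ, √2, √3, √φ]`. -/
noncomputable def goldenKummerEmbedding :
    (((Unit × Bool) × Bool) × Bool) × Bool → GoldenKummer →+* ℂ :=
  quadraticLiftFamily (fun i => Complex.ofRealHom.comp (goldenSqrtTwoThreeEmbedding i))
    sqrtPhiConjugate fun i => by simpa using sqrtPhiConjugate_mul_self i

theorem liouvilleFamily_goldenKummerEmbedding : LiouvilleFamily goldenKummerEmbedding := by
  have hneg : goldenSqrtTwoThreeEmbedding ((((), false), true), true)
      (.C (.C (ω : GoldenInt))) < 0 := by
    rw [goldenSqrtTwoThreeEmbedding_phi]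
    exact goldenConj_neg
  exact liouvilleFamily_goldenSqrtTwoThreeEmbedding.ofReal.quadraticLiftFamily
    (eq_zero_of_norm_eq_zero_of_map_neg _
      (liouvilleFamily_goldenSqrtTwoThreeEmbedding.injective _) hneg) _ _

/-- The numbers whose logarithms enter the linear forms. -/
noncomputable def base : Fin 3 → ℝ := ![2, 3, φ]

/-- The square roots of `2`, `3` and `φ` in `ℤ[φ, √2, √3, √φ]`. -/
def kummerRoot : Fin 3 → GoldenKummer := ![.C (.C ω), .C ω, ω]

theorem norm_map_kummerRoot_le (f : GoldenKummer →+* ℂ) (i : Fin 3) :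
    ‖f (kummerRoot i)‖ ≤ √(base i) := by
  have hroot {x y : GoldenKummer} (hxy : x * x = y) {r : ℝ} (hy : ‖f y‖ ≤ r) : ‖f x‖ ≤ √r :=
    le_sqrt_of_sq_le <| by rwa [pow_two, ← norm_mul, ← map_mul, hxy]
  fin_cases i
  · exact hroot (y := 2) (by ext <;> simp [kummerRoot])
      ((congrArg _ (map_ofNat f 2)).trans_le (by simp [base]))
  · exact hroot (y := 3) (by ext <;> simp [kummerRoot])
      ((congrArg _ (map_ofNat f 3)).trans_le (by simp [base]))
  · let p : GoldenKummer := .C (.C (.C ω))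
    refine hroot (y := p) (by ext <;> simp [kummerRoot, p]) ?_
    have hp : p * p = p + 1 := by ext <;> simp [p]
    have hsq : ‖f p‖ * ‖f p‖ ≤ ‖f p‖ + 1 := by
      rw [← norm_mul, ← map_mul, hp, map_add, map_one]
      exact (norm_add_le _ _).trans (by simp)
    change ‖f p‖ ≤ φ
    nlinarith [norm_nonneg (f p), goldenRatio_sq, one_lt_goldenRatio]

theorem goldenKummerEmbedding_kummerRoot (i : Fin 3) :
    goldenKummerEmbedding (((((), true), true), true), true) (kummerRoot i) = √(base i) := by
  fin_cases i <;>
    simp [goldenKummerEmbedding, goldenSqrtTwoThreeEmbedding, goldenSqrtTwoEmbedding,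
      quadraticLiftFamily, kummerRoot, base, sqrtPhiConjugate]

variable {α : Type*} (S : Finset α) (c : α → ℤ) (m : α → Fin 3 → ℕ)

theorem sum_kummerRoot_pow_eq_zero {M : ℝ}
    (hM : ∑ a ∈ S, |(c a : ℝ)| * ∏ i, √(base i) ^ m a i ≤ M)
    (hsmall : |∑ a ∈ S, c a * ∏ i, √(base i) ^ m a i| * M ^ 15 < 1) :
    ∑ a ∈ S, (c a : GoldenKummer) * ∏ i, kummerRoot i ^ m a i = 0 := by
  set x := ∑ a ∈ S, (c a : GoldenKummer) * ∏ i, kummerRoot i ^ m a i with hx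
  by_contra hne
  have hbound (j) : ‖goldenKummerEmbedding j x‖ ≤ M := by
    rw [hx, map_sum]
    refine (norm_sum_le _ _).trans (le_trans (Finset.sum_le_sum fun a _ => ?_) hM)
    rw [map_mul, norm_mul, map_intCast, Complex.norm_intCast, map_prod, norm_prod]
    gcongr with i
    rw [map_pow, norm_pow]
    gcongr
    exact norm_map_kummerRoot_le _ _
  have hreal : ‖goldenKummerEmbedding (((((), true), true), true), true) x‖ =
      |∑ a ∈ S, c a * ∏ i, √(base i) ^ m a i| := by
    rw [← Real.norm_eq_abs, ← Complex.norm_real]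
    simp [hx, map_sum, map_prod, goldenKummerEmbedding_kummerRoot]
  have hliouville := liouvilleFamily_goldenKummerEmbedding.one_le_norm_mul_pow hne hbound
    (((((), true), true), true), true)
  rw [hreal] at hliouville
  exact absurd hsmall (not_lt.mpr (hliouville.trans_eq (by simp)))

theorem sum_base_pow_div_two_eq_zero
    (h : ∑ a ∈ S, (c a : GoldenKummer) * ∏ i, kummerRoot i ^ m a i = 0) {e : Fin 3 → ℕ}
    (he : ∀ i, e i < 2) :
    ∑ a ∈ S with ∀ i, m a i % 2 = e i, c a * ∏ i, base i ^ (m a i / 2) = 0 := by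
  have hphi := sum_mul_pow_div_two_eq_zero S
    (fun a => (c a : GoldenSqrtTwoThree) * .C ω ^ m a 0 * ω ^ m a 1) (fun a => m a 2)
    ((Finset.sum_congr rfl fun a _ => by
      simp only [C_mul, C_pow, C_intCast, Fin.prod_univ_three, kummerRoot, Matrix.cons_val]
      ring).trans h) (he 2)
  have hthree := sum_mul_pow_div_two_eq_zero _
    (fun a => (c a : GoldenSqrtTwo) * ω ^ m a 0 * .C ω ^ (m a 2 / 2)) (fun a => m a 1)
    ((Finset.sum_congr rfl fun a _ => by
      simp only [C_mul, C_pow, C_intCast]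
      ring).trans hphi) (he 1)
  have htwo := sum_mul_pow_div_two_eq_zero _
    (fun a => (c a : GoldenInt) * ω ^ (m a 2 / 2) * 3 ^ (m a 1 / 2)) (fun a => m a 0)
    ((Finset.sum_congr rfl fun a _ => by
      simp only [C_mul, C_pow, C_intCast, C_ofNat]
      ring).trans hthree) (he 0)
  have hreal := congrArg (goldenEmbedding ((), true)) htwo
  have homega : goldenEmbedding ((), true) ω = φ := by simp [goldenEmbedding, quadraticLiftFamily]
  simp only [map_zero, map_sum, map_mul, map_pow, map_intCast, homega, Finset.filter_filter]
    at hreal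
  refine (Finset.sum_congr (Finset.filter_congr fun a _ => ?_) fun a _ => ?_).trans hreal
  · rw [Fin.forall_fin_succ, Fin.forall_fin_two]
    exact ⟨fun h => ⟨⟨h.2.2, h.2.1⟩, h.1⟩, fun h => ⟨h.2, h.1.2, h.1.1⟩⟩
  · rw [Fin.prod_univ_three, map_ofNat (goldenEmbedding ((), true)) 2,
      map_ofNat (goldenEmbedding ((), true)) 3]
    simp only [base, Matrix.cons_val]
    ring

theorem one_lt_base (i : Fin 3) : 1 < base i := by
  fin_cases i
  exacts [one_lt_two, by norm_num [base], one_lt_goldenRatio]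

theorem base_pos (i : Fin 3) : 0 < base i := one_pos.trans (one_lt_base i)

theorem sum_parity_class_eq_zero {M : ℝ}
    (hM : ∑ a ∈ S, |(c a : ℝ)| * ∏ i, √(base i) ^ m a i ≤ M)
    (hsmall : |∑ a ∈ S, c a * ∏ i, √(base i) ^ m a i| * M ^ 15 < 1) {e : Fin 3 → ℕ}
    (he : ∀ i, e i < 2) :
    ∑ a ∈ S with ∀ i, m a i % 2 = e i, c a * ∏ i, √(base i) ^ m a i = 0 := by
  have hzero := sum_base_pow_div_two_eq_zero S c m (sum_kummerRoot_pow_eq_zero S c m hM hsmall) he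
  rw [← mul_zero (∏ i, √(base i) ^ e i), ← hzero, Finset.mul_sum]
  refine Finset.sum_congr rfl fun a ha => ?_
  have hroot (i : Fin 3) : √(base i) ^ m a i = √(base i) ^ e i * base i ^ (m a i / 2) := by
    nth_rw 3 [← sq_sqrt (base_pos i).le]
    rw [← pow_mul, ← pow_add, ← (Finset.mem_filter.mp ha).2 i, Nat.mod_add_div]
  simp only [hroot, Finset.prod_mul_distrib]
  ring

end GoldenKummer

section TruncNorm

open Finset PowerSeries

variable {𝕜 ι : Type*} [NormedField 𝕜] {K : ℕ}

/-- The `ℓ¹` norm of the coefficients of degree less than `K`, a submultiplicative seminorm on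
power series. -/
noncomputable def truncNorm (K : ℕ) (p : 𝕜⟦X⟧) : ℝ :=
  ∑ i ∈ range K, ‖coeff i p‖

theorem truncNorm_nonneg (p : 𝕜⟦X⟧) : 0 ≤ truncNorm K p :=
  sum_nonneg fun _ _ => norm_nonneg _

theorem truncNorm_mul_le (p q : 𝕜⟦X⟧) : truncNorm K (p * q) ≤ truncNorm K p * truncNorm K q := by
  have hcoeff (n : ℕ) : ‖coeff n (p * q)‖ ≤
      ∑ m ∈ range (n + 1), ‖coeff m p‖ * ‖coeff (n - m) q‖ := by
    rw [coeff_mul, Finset.Nat.sum_antidiagonal_eq_sum_range_succ_mk]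
    exact norm_sum_le_of_le _ fun m _ => (norm_mul _ _).le
  calc truncNorm K (p * q)
      ≤ ∑ n ∈ range K, ∑ m ∈ range (n + 1), ‖coeff m p‖ * ‖coeff (n - m) q‖ :=
        sum_le_sum fun n _ => hcoeff n
    _ = ∑ m ∈ range K, ‖coeff m p‖ * ∑ k ∈ range (K - m), ‖coeff k q‖ := by
        simp only [sum_range_diag_flip K fun m k => ‖coeff m p‖ * ‖coeff k q‖, mul_sum]
    _ ≤ ∑ m ∈ range K, ‖coeff m p‖ * truncNorm K q := by
        gcongr with m _
        exact sum_le_sum_of_subset_of_nonneg (range_subset_range.mpr (K.sub_le m))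
          fun _ _ _ => norm_nonneg _
    _ = truncNorm K p * truncNorm K q := (sum_mul ..).symm

theorem truncNorm_one_le : truncNorm K (1 : 𝕜⟦X⟧) ≤ 1 := by
  cases K with
  | zero => simp [truncNorm]
  | succ K => simp [truncNorm, sum_range_succ', coeff_one]

theorem truncNorm_pow_le (p : 𝕜⟦X⟧) (k : ℕ) : truncNorm K (p ^ k) ≤ truncNorm K p ^ k := by
  induction k with
  | zero => simpa using truncNorm_one_le
  | succ k ih =>
    rw [pow_succ, pow_succ]
    exact (truncNorm_mul_le _ _).trans (by gcongr; exact truncNorm_nonneg p)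

theorem truncNorm_prod_le (S : Finset ι) (p : ι → 𝕜⟦X⟧) :
    truncNorm K (∏ i ∈ S, p i) ≤ ∏ i ∈ S, truncNorm K (p i) := by
  classical
  induction S using Finset.induction_on with
  | empty => simpa using truncNorm_one_le
  | insert i S hi ih =>
    rw [prod_insert hi, prod_insert hi]
    exact (truncNorm_mul_le _ _).trans (by gcongr; exact truncNorm_nonneg (p i))

theorem inv_X_add_C {F : Type*} [Field F] {D : F} (hD : D ≠ 0) :
    (X + C D : F⟦X⟧)⁻¹ = mk fun j => (-1) ^ j * D⁻¹ ^ (j + 1) := by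
  rw [PowerSeries.inv_eq_iff_mul_eq_one (by simpa)]
  ext i
  cases i with
  | zero => simp [mul_add, hD]
  | succ i =>
    simp only [mul_add, map_add, coeff_succ_mul_X, coeff_mul_C, coeff_mk, coeff_one,
      Nat.add_eq_zero_iff, one_ne_zero, and_false, if_false]
    linear_combination -((-1) ^ i * D⁻¹ ^ (i + 1)) * mul_inv_cancel₀ hD

theorem truncNorm_inv_X_add_C_le {D : 𝕜} (hD : 1 < ‖D‖) :
    truncNorm K (X + C D : 𝕜⟦X⟧)⁻¹ ≤ 1 / (‖D‖ - 1) := by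
  have hinv : ‖D‖⁻¹ < 1 := inv_lt_one_of_one_lt₀ hD
  have hterm (j : ℕ) : ‖coeff j (X + C D : 𝕜⟦X⟧)⁻¹‖ = ‖D‖⁻¹ ^ j * ‖D‖⁻¹ := by
    simp [inv_X_add_C (norm_pos_iff.mp (one_pos.trans hD)), pow_succ]
  have hsum : HasSum (fun j : ℕ => ‖D‖⁻¹ ^ j * ‖D‖⁻¹) ((1 - ‖D‖⁻¹)⁻¹ * ‖D‖⁻¹) :=
    (hasSum_geometric_of_lt_one (by positivity) hinv).mul_right _
  have hD' : ‖D‖ - 1 ≠ 0 := by linarith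
  calc truncNorm K (X + C D : 𝕜⟦X⟧)⁻¹ = ∑ j ∈ range K, ‖D‖⁻¹ ^ j * ‖D‖⁻¹ := by
        simp only [truncNorm, hterm]
    _ ≤ (1 - ‖D‖⁻¹)⁻¹ * ‖D‖⁻¹ := sum_le_hasSum _ (fun j _ => by positivity) hsum
    _ = 1 / (‖D‖ - 1) := by field_simp

theorem eval_trunc {R : Type*} [CommSemiring R] (p : R⟦X⟧) (v : R) :
    (p.trunc K).eval v = ∑ i ∈ range K, coeff i p * v ^ i := by
  simp [Polynomial.eval, eval₂_trunc_eq_sum_range]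

theorem norm_eval_trunc_le (p : 𝕜⟦X⟧) {v : 𝕜} {R : ℝ} (hR : 1 ≤ R) (hv : ‖v‖ ≤ R) :
    ‖(p.trunc K).eval v‖ ≤ truncNorm K p * R ^ K := by
  rw [eval_trunc, truncNorm, sum_mul]
  refine norm_sum_le_of_le _ fun i hi => ?_
  rw [norm_mul, norm_pow]
  gcongr
  exact (pow_le_pow_left₀ (norm_nonneg v) hv i).trans
    (pow_le_pow_right₀ hR (mem_range.mp hi).le)

end TruncNorm

section Hermite

open Finset Polynomial

variable {𝕜 ι : Type*} [DecidableEq ι] {S : Finset ι} {s : ι → 𝕜}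

/-- The Hermite interpolation polynomial taking the value `p i` at the node `s i` to order `K`,
where `p i` is a power series in the local parameter `X - s i`. -/
noncomputable def hermiteInterpolant [Field 𝕜] (K : ℕ) (S : Finset ι) (s : ι → 𝕜)
    (p : ι → PowerSeries 𝕜) : 𝕜[X] :=
  ∑ i ∈ S, (∏ j ∈ S.erase i, (X - C (s j)) ^ K) *
    (PowerSeries.trunc K (p i * ∏ j ∈ S.erase i,
      (PowerSeries.X + PowerSeries.C (s i - s j))⁻¹ ^ K)).comp (X - C (s i))

theorem X_pow_dvd_sub_trunc [CommRing 𝕜] {K : ℕ} {q : 𝕜[X]} {p : PowerSeries 𝕜}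
    (h : PowerSeries.trunc K (q : PowerSeries 𝕜) = PowerSeries.trunc K p) :
    X ^ K ∣ q - PowerSeries.trunc K p := by
  rw [X_pow_dvd_iff]
  intro d hd
  have hcoeff := congrArg (fun r => r.coeff d) h
  simp only [PowerSeries.coeff_trunc, if_pos hd, coeff_coe] at hcoeff
  rw [coeff_sub, PowerSeries.coeff_trunc, if_pos hd, hcoeff, sub_self]

theorem X_sub_C_pow_dvd_hermiteInterpolant_sub [Field 𝕜] (K : ℕ) (p : ι → PowerSeries 𝕜)
    (hs : Set.InjOn s S) {i : ι} (hi : i ∈ S) :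
    (X - C (s i)) ^ K ∣
      hermiteInterpolant K S s p - (PowerSeries.trunc K (p i)).comp (X - C (s i)) := by
  rw [hermiteInterpolant, ← add_sum_erase _ _ hi, add_sub_right_comm]
  refine dvd_add ?_ (dvd_sum fun j hj => Dvd.dvd.mul_right
    (dvd_prod_of_mem (fun j => (X - C (s j)) ^ K)
      (mem_erase.mpr ⟨(ne_of_mem_erase hj).symm, hi⟩)) _)
  set T : 𝕜[X] := ∏ j ∈ S.erase i, (X + C (s i - s j)) ^ K with hT
  set J : PowerSeries 𝕜 :=
    ∏ j ∈ S.erase i, (PowerSeries.X + PowerSeries.C (s i - s j))⁻¹ ^ K with hJ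
  have hshift : ∏ j ∈ S.erase i, (X - C (s j)) ^ K = T.comp (X - C (s i)) := by
    simp [hT, Polynomial.prod_comp]
  have hTJ : (T : PowerSeries 𝕜) * J = 1 := by
    rw [hT, hJ, ← coeToPowerSeries.ringHom_apply, map_prod, ← prod_mul_distrib]
    refine prod_eq_one fun j hj => ?_
    have hij : s i - s j ≠ 0 := sub_ne_zero.mpr fun h =>
      ne_of_mem_erase hj (hs (mem_of_mem_erase hj) hi h.symm)
    simp only [map_pow, coeToPowerSeries.ringHom_apply, Polynomial.coe_add, coe_X, coe_C]
    rw [← mul_pow, PowerSeries.mul_inv_cancel _ (by simpa), one_pow]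
  obtain ⟨W, hW⟩ : X ^ K ∣ T * PowerSeries.trunc K (p i * J) - PowerSeries.trunc K (p i) := by
    refine X_pow_dvd_sub_trunc ?_
    rw [Polynomial.coe_mul, PowerSeries.trunc_mul_trunc, mul_left_comm, hTJ, mul_one]
  refine ⟨W.comp (X - C (s i)), ?_⟩
  rw [hshift, ← mul_comp, ← sub_comp, hW]
  simp

theorem norm_eval_hermiteInterpolant_le [NormedField 𝕜] (K : ℕ) (p : ι → PowerSeries 𝕜)
    (hs : ∀ i ∈ S, ∀ j ∈ S.erase i, 1 < ‖s i - s j‖) {z : 𝕜} {R : ℝ} (hR : 1 ≤ R)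
    (hz : ∀ i ∈ S, ‖z - s i‖ ≤ R) :
    ‖(hermiteInterpolant K S s p).eval z‖ ≤ ∑ i ∈ S, truncNorm K (p i) *
      (R ^ #S / ∏ j ∈ S.erase i, (‖s i - s j‖ - 1)) ^ K := by
  rw [hermiteInterpolant, eval_finsetSum]
  refine norm_sum_le_of_le _ fun i hi => ?_
  set J : PowerSeries 𝕜 :=
    ∏ j ∈ S.erase i, (PowerSeries.X + PowerSeries.C (s i - s j))⁻¹ ^ K
  have hprod : ‖(∏ j ∈ S.erase i, (X - C (s j)) ^ K).eval z‖ ≤ (R ^ K) ^ (#S - 1) := by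
    simp only [eval_prod, eval_pow, eval_sub, eval_X, eval_C, norm_prod, norm_pow]
    rw [← card_erase_of_mem hi]
    refine (prod_le_prod (fun _ _ => by positivity) fun j hj => ?_).trans_eq (prod_const _)
    exact pow_le_pow_left₀ (norm_nonneg _) (hz j (mem_of_mem_erase hj)) K
  have hinv : truncNorm K J ≤ ∏ j ∈ S.erase i, (1 / (‖s i - s j‖ - 1)) ^ K :=
    (truncNorm_prod_le _ _).trans <| prod_le_prod (fun _ _ => truncNorm_nonneg _) fun j hj =>
      (truncNorm_pow_le _ _).trans <| pow_le_pow_left₀ (truncNorm_nonneg _)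
        (truncNorm_inv_X_add_C_le (hs i hi j hj)) K
  have htrunc := norm_eval_trunc_le (K := K) (p i * J) hR (hz i hi)
  simp only [eval_mul, eval_comp, eval_sub, eval_X, eval_C, norm_mul]
  calc _ ≤ (R ^ K) ^ (#S - 1) * (truncNorm K (p i * J) * R ^ K) := by gcongr
    _ ≤ (R ^ K) ^ (#S - 1) * (truncNorm K (p i) *
          (∏ j ∈ S.erase i, (1 / (‖s i - s j‖ - 1)) ^ K) * R ^ K) := by
        gcongr
        exact (truncNorm_mul_le _ _).trans (by gcongr; exact truncNorm_nonneg _)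
    _ = truncNorm K (p i) *
          (R ^ #S / ∏ j ∈ S.erase i, (‖s i - s j‖ - 1)) ^ K := by
        obtain ⟨m, hm⟩ := Nat.exists_eq_add_of_lt (card_pos.mpr ⟨i, hi⟩)
        rw [hm, prod_pow, prod_div_distrib, prod_const_one, div_pow, div_pow, one_pow]
        simp only [Nat.add_sub_cancel]
        ring

end Hermite

section EntireZeros

open Finset

variable {ι : Type*} {S : Finset ι} {s : ι → ℂ} {K : ℕ} {F : ℂ → ℂ}

theorem exists_differentiable_eq_pow_mul {a : ℂ} (hF : Differentiable ℂ F)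
    (horder : K ≤ analyticOrderAt F a) :
    ∃ G : ℂ → ℂ, Differentiable ℂ G ∧ ∀ z, F z = (z - a) ^ K * G z := by
  induction K generalizing F with
  | zero => exact ⟨F, hF, by simp⟩
  | succ K ih =>
    have hFa : F a = 0 := apply_eq_zero_of_analyticOrderAt_ne_zero fun h => by simp [h] at horder
    have hslope : Differentiable ℂ (dslope F a) := by
      rw [← differentiableOn_univ] at hF ⊢
      exact (Complex.differentiableOn_dslope Filter.univ_mem).mpr hF
    have hF_eq : F = (fun z => z - a) * dslope F a := by
      ext z
      simpa [hFa] using (sub_smul_dslope F a z).symm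
    have horder' : K ≤ analyticOrderAt (dslope F a) a := by
      have hlin : analyticOrderAt (fun z : ℂ => z - a) a = 1 := by
        simpa only [pow_one, Nat.cast_one] using analyticOrderAt_centeredMonomial (z₀ := a) (n := 1)
      rw [hF_eq, analyticOrderAt_mul (by fun_prop) (hslope.analyticAt a), hlin, add_comm] at horder
      simpa using horder
    obtain ⟨G, hG, hG_eq⟩ := ih hslope horder'
    refine ⟨G, hG, fun z => ?_⟩
    rw [hF_eq, Pi.mul_apply, hG_eq]
    ring

theorem exists_differentiable_eq_prod_pow_mul (hF : Differentiable ℂ F) (hs : Set.InjOn s S)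
    (horder : ∀ i ∈ S, K ≤ analyticOrderAt F (s i)) :
    ∃ G : ℂ → ℂ, Differentiable ℂ G ∧ ∀ z, F z = (∏ i ∈ S, (z - s i) ^ K) * G z := by
  classical
  induction S using Finset.induction_on with
  | empty => exact ⟨F, hF, by simp⟩
  | insert i S hi ih =>
    obtain ⟨G, hG, hFG⟩ := ih (hs.mono (by simp)) fun j hj => horder j (mem_insert_of_mem hj)
    have hunit : analyticOrderAt (fun z => ∏ j ∈ S, (z - s j) ^ K) (s i) = 0 := by
      refine (AnalyticAt.analyticOrderAt_eq_zero (by fun_prop)).mpr <|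
        prod_ne_zero_iff.mpr fun j hj => pow_ne_zero _ <| sub_ne_zero.mpr fun h => hi ?_
      rwa [hs (mem_insert_self i S) (mem_insert_of_mem hj) h]
    have hGorder : K ≤ analyticOrderAt G (s i) := by
      have hFi := horder i (mem_insert_self i S)
      rwa [show F = (fun z => ∏ j ∈ S, (z - s j) ^ K) * G from funext hFG,
        analyticOrderAt_mul (by fun_prop) (hG.analyticAt _), hunit, zero_add] at hFi
    obtain ⟨G', hG', hGG'⟩ := exists_differentiable_eq_pow_mul hG hGorder
    refine ⟨G', hG', fun z => ?_⟩
    rw [hFG, hGG', prod_insert hi]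
    ring

theorem norm_le_mul_div_pow_of_le_analyticOrderAt (hF : Differentiable ℂ F) (hs : Set.InjOn s S)
    (horder : ∀ i ∈ S, K ≤ analyticOrderAt F (s i)) {w : ℂ} {ρ a b B : ℝ} (ha : 0 < a)
    (hw : ‖w‖ < ρ) (hwb : ∀ i ∈ S, ‖w - s i‖ ≤ b) (hza : ∀ z, ‖z‖ = ρ → ∀ i ∈ S, a ≤ ‖z - s i‖)
    (hB : ∀ z, ‖z‖ = ρ → ‖F z‖ ≤ B) :
    ‖F w‖ ≤ B * (b / a) ^ (#S * K) := by
  obtain ⟨G, hG, hFG⟩ := exists_differentiable_eq_prod_pow_mul hF hs horder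
  have hpow (x : ℝ) : ∏ _i ∈ S, x ^ K = x ^ (#S * K) := by
    rw [prod_const, ← pow_mul, mul_comm]
  have hGw : ‖G w‖ ≤ B / a ^ (#S * K) := by
    refine Complex.norm_le_of_forall_mem_frontier_norm_le (U := Metric.ball 0 ρ)
      Metric.isBounded_ball hG.diffContOnCl (fun z hz => ?_) (subset_closure (by simpa))
    rw [frontier_ball _ (ne_of_gt ((norm_nonneg w).trans_lt hw)), mem_sphere_zero_iff_norm] at hz
    rw [le_div_iff₀' (by positivity)]
    refine le_trans ?_ (hB z hz)
    rw [hFG, norm_mul, norm_prod, ← hpow]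
    gcongr with i hi
    rw [norm_pow]
    gcongr
    exact hza z hz i hi
  calc ‖F w‖ = ‖∏ i ∈ S, (w - s i) ^ K‖ * ‖G w‖ := by rw [hFG, norm_mul]
    _ ≤ b ^ (#S * K) * (B / a ^ (#S * K)) := by
      rw [norm_prod, ← hpow b]
      gcongr with i hi
      · exact prod_nonneg fun i hi =>
          pow_nonneg ((norm_nonneg _).trans (hwb i hi)) _
      · rw [norm_pow]
        gcongr
        exact hwb i hi
    _ = B * (b / a) ^ (#S * K) := by rw [div_pow]; ring

/-- The formal Taylor series of `f` at `a`. -/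
noncomputable def taylorSeries (f : ℂ → ℂ) (a : ℂ) : PowerSeries ℂ :=
  PowerSeries.mk fun t => iteratedDeriv t f a / t.factorial

theorem natCast_le_analyticOrderAt_sub_eval_taylorSeries {f : ℂ → ℂ} {a : ℂ}
    (hf : AnalyticAt ℂ f a) :
    K ≤ analyticOrderAt
      (fun z => f z - (((taylorSeries f a).trunc K).comp (.X - .C a)).eval z) a := by
  obtain ⟨r, hr, hfr⟩ := AnalyticAt.exists_eq_sum_add_pow_mul (f := fun z => f (z + a))
    (hf.comp_of_eq (by fun_prop) (by simp)) K
  have hpoly : AnalyticAt ℂ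
      (fun z => (((taylorSeries f a).trunc K).comp (.X - .C a)).eval z) a :=
    (Polynomial.differentiable _).analyticAt a
  rw [natCast_le_analyticOrderAt (hf.fun_sub hpoly)]
  refine ⟨fun z => r (z - a), hr.comp_of_eq (by fun_prop) (by simp), .of_forall fun z => ?_⟩
  have hz := hfr (z - a)
  simp only [sub_add_cancel, iteratedDeriv_comp_add_const, zero_add, smul_eq_mul] at hz
  simp only [hz, Polynomial.eval_comp, Polynomial.eval_sub, Polynomial.eval_X, Polynomial.eval_C,
    eval_trunc, taylorSeries, PowerSeries.coeff_mk, smul_eq_mul]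
  rw [add_sub_right_comm, ← sum_sub_distrib, sum_eq_zero fun t _ => by ring, zero_add]

theorem natCast_le_analyticOrderAt_sub_eval_hermiteInterpolant [DecidableEq ι] {f : ℂ → ℂ}
    (hf : Differentiable ℂ f) (hs : Set.InjOn s S) {i : ι} (hi : i ∈ S) :
    K ≤ analyticOrderAt
      (fun z => f z - (hermiteInterpolant K S s fun i => taylorSeries f (s i)).eval z) (s i) := by
  obtain ⟨W, hW⟩ :=
    X_sub_C_pow_dvd_hermiteInterpolant_sub K (fun i => taylorSeries f (s i)) hs hi
  have hWan : AnalyticAt ℂ (fun z => W.eval z) (s i) := W.differentiable.analyticAt _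
  have hWorder : K ≤ analyticOrderAt (fun z => (z - s i) ^ K * W.eval z) (s i) :=
    (natCast_le_analyticOrderAt (by fun_prop)).mpr ⟨_, hWan, .of_forall fun _ => rfl⟩
  refine (le_min (natCast_le_analyticOrderAt_sub_eval_taylorSeries
    (hf.analyticAt (s i))) hWorder).trans (le_analyticOrderAt_sub.trans_eq ?_)
  congr 1
  ext z
  have hz := congrArg (Polynomial.eval z) hW
  simp only [Polynomial.eval_sub, Polynomial.eval_mul, Polynomial.eval_pow, Polynomial.eval_X,
    Polynomial.eval_C] at hz
  simp only [Pi.sub_apply, ← hz]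
  ring

end EntireZeros

section OddNodes

open Finset

/-- The `i`-th odd positive integer, as an interpolation node. -/
def oddNode (i : ℕ) : ℂ := 2 * i + 1

theorem oddNode_eq_ofReal (i : ℕ) : oddNode i = ((2 * i + 1 : ℝ) : ℂ) := by
  simp [oddNode]

theorem norm_oddNode (i : ℕ) : ‖oddNode i‖ = 2 * i + 1 := by
  rw [oddNode_eq_ofReal, Complex.norm_of_nonneg (by positivity)]

theorem norm_oddNode_sub_oddNode (i j : ℕ) : ‖oddNode i - oddNode j‖ = 2 * |(i : ℝ) - j| := by
  have : oddNode i - oddNode j = ((2 * ((i : ℝ) - j) : ℝ) : ℂ) := by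
    push_cast [oddNode]
    ring
  rw [this, Complex.norm_real, Real.norm_eq_abs, abs_mul, abs_two]

theorem oddNode_injective : Function.Injective oddNode := by
  intro i j hij
  simpa [oddNode] using hij

theorem one_le_abs_natCast_sub_natCast {i j : ℕ} (hij : i ≠ j) : (1 : ℝ) ≤ |(i : ℝ) - j| := by
  exact_mod_cast Int.one_le_abs (sub_ne_zero.mpr (Nat.cast_injective.ne hij) : (i : ℤ) - j ≠ 0)

theorem prod_erase_abs_sub {n i : ℕ} (hi : i < n) :
    ∏ j ∈ (range n).erase i, |(i : ℝ) - j| = (i.factorial : ℝ) * (n - 1 - i).factorial := by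
  have hsplit : (range n).erase i = range i ∪ Ico (i + 1) n := by
    ext j
    simp only [mem_erase, mem_range, mem_union, mem_Ico]
    lia
  have hdisj : Disjoint (range i) (Ico (i + 1) n) := by
    rw [disjoint_left]
    intro j hj
    simp only [mem_range, mem_Ico] at hj ⊢
    lia
  rw [hsplit, prod_union hdisj]
  congr 1
  · rw [← prod_range_add_one_eq_factorial, ← prod_range_reflect]
    push_cast
    refine prod_congr rfl fun j hj => ?_
    have hji : j + 1 ≤ i := mem_range.mp hj
    rw [Nat.sub_sub, add_comm 1 j, Nat.cast_sub hji, sub_sub_cancel, abs_of_nonneg (by positivity)]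
    push_cast
    rfl
  · rw [prod_Ico_eq_prod_range, ← prod_range_add_one_eq_factorial,
      show n - (i + 1) = n - 1 - i by lia]
    push_cast
    refine prod_congr rfl fun j _ => ?_
    rw [abs_sub_comm, show (i : ℝ) + 1 + j - i = j + 1 by ring, abs_of_nonneg (by positivity)]

theorem factorial_le_four_pow_mul {n i : ℕ} (hi : i < n) :
    n.factorial ≤ 4 ^ n * (i.factorial * (n - 1 - i).factorial) := by
  have hchoose : (n - 1).choose i ≤ 2 ^ n :=
    (Nat.choose_le_two_pow _ _).trans (Nat.pow_le_pow_right two_pos (Nat.sub_le n 1))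
  calc n.factorial = n * ((n - 1).choose i * (i.factorial * (n - 1 - i).factorial)) := by
        rw [← mul_assoc ((n - 1).choose i), Nat.choose_mul_factorial_mul_factorial (by lia),
          Nat.mul_factorial_pred (by lia)]
    _ ≤ 2 ^ n * (2 ^ n * (i.factorial * (n - 1 - i).factorial)) := by
        gcongr
        exact Nat.lt_two_pow_self.le
    _ = 4 ^ n * (i.factorial * (n - 1 - i).factorial) := by
        rw [← mul_assoc, ← mul_pow]
        norm_num

theorem pow_div_pow_le_prod_erase_oddNode {n i : ℕ} (hi : i < n) :
    (n : ℝ) ^ n / (4 * Real.exp 1) ^ n ≤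
      ∏ j ∈ (range n).erase i, (‖oddNode i - oddNode j‖ - 1) := by
  have hexp : (n : ℝ) ^ n ≤ Real.exp 1 ^ n * n.factorial := by
    have := Real.pow_div_factorial_le_exp (n : ℝ) (Nat.cast_nonneg n) n
    rwa [div_le_iff₀ (by positivity), ← Real.exp_one_pow] at this
  have hfactorial : (n.factorial : ℝ) ≤ 4 ^ n * (i.factorial * (n - 1 - i).factorial) := by
    exact_mod_cast factorial_le_four_pow_mul hi
  calc (n : ℝ) ^ n / (4 * Real.exp 1) ^ n ≤ (i.factorial : ℝ) * (n - 1 - i).factorial := by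
        rw [div_le_iff₀ (by positivity), mul_pow]
        calc (n : ℝ) ^ n ≤ Real.exp 1 ^ n * n.factorial := hexp
          _ ≤ Real.exp 1 ^ n * (4 ^ n * (i.factorial * (n - 1 - i).factorial)) := by gcongr
          _ = _ := by ring
    _ = ∏ j ∈ (range n).erase i, |(i : ℝ) - j| := (prod_erase_abs_sub hi).symm
    _ ≤ _ := prod_le_prod (fun _ _ => abs_nonneg _) fun j hj => by
        rw [norm_oddNode_sub_oddNode]
        linarith [one_le_abs_natCast_sub_natCast (ne_of_mem_erase hj).symm]

theorem pow_div_prod_erase_oddNode_le {n i : ℕ} (hi : i < n) :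
    (24 * n : ℝ) ^ n / ∏ j ∈ (range n).erase i, (‖oddNode i - oddNode j‖ - 1) ≤ 261 ^ n := by
  have hn : (0 : ℝ) < n := by exact_mod_cast i.zero_le.trans_lt hi
  calc _ ≤ (24 * n : ℝ) ^ n / ((n : ℝ) ^ n / (4 * Real.exp 1) ^ n) := by
        gcongr
        exact pow_div_pow_le_prod_erase_oddNode hi
    _ = (96 * Real.exp 1) ^ n := by
        rw [div_div_eq_mul_div, ← mul_pow, ← div_pow]
        congr 1
        field_simp
        ring
    _ ≤ 261 ^ n := by
        gcongr
        linarith [Real.exp_one_lt_d9]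

variable {n K : ℕ} {f : ℂ → ℂ} {η : ℝ}

theorem norm_eval_hermiteInterpolant_oddNode_le {p : ℕ → PowerSeries ℂ}
    (hη : ∀ i < n, truncNorm K (p i) ≤ η) {z : ℂ} (hz : ‖z‖ ≤ 22 * n) :
    ‖(hermiteInterpolant K (range n) oddNode p).eval z‖ ≤ n * η * 261 ^ (n * K) := by
  obtain rfl | hn := n.eq_zero_or_pos
  · simp [hermiteInterpolant]
  have hnR : (1 : ℝ) ≤ n := by exact_mod_cast hn
  have hdist : ∀ i ∈ range n, ‖z - oddNode i‖ ≤ 24 * n := by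
    intro i hi
    have hin : (i : ℝ) + 1 ≤ n := by exact_mod_cast mem_range.mp hi
    linarith [norm_sub_le z (oddNode i), norm_oddNode i]
  have hsep : ∀ i ∈ range n, ∀ j ∈ (range n).erase i, 1 < ‖oddNode i - oddNode j‖ := by
    intro i _ j hj
    rw [norm_oddNode_sub_oddNode]
    linarith [one_le_abs_natCast_sub_natCast (ne_of_mem_erase hj).symm]
  have hnode : ∀ i ∈ range n, truncNorm K (p i) * ((24 * n : ℝ) ^ #(range n) /
      ∏ j ∈ (range n).erase i, (‖oddNode i - oddNode j‖ - 1)) ^ K ≤ η * 261 ^ (n * K) := by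
    intro i hi
    have hη₀ : 0 ≤ η := (truncNorm_nonneg _).trans (hη i (mem_range.mp hi))
    have hprod : 0 ≤ ∏ j ∈ (range n).erase i, (‖oddNode i - oddNode j‖ - 1) :=
      prod_nonneg fun j hj => by linarith [hsep i hi j hj]
    rw [pow_mul, card_range]
    gcongr
    · exact hη i (mem_range.mp hi)
    · exact pow_div_prod_erase_oddNode_le (mem_range.mp hi)
  refine (norm_eval_hermiteInterpolant_le K p hsep (by linarith) hdist).trans
    ((sum_le_card_nsmul _ _ _ hnode).trans_eq ?_)
  rw [card_range, nsmul_eq_mul, mul_assoc]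

theorem norm_le_of_truncNorm_taylorSeries_le (hn : 1 ≤ n) (hf : Differentiable ℂ f)
    (hη : ∀ i < n, truncNorm K (taylorSeries f (oddNode i)) ≤ η) {M : ℝ}
    (hM : ∀ z, ‖z‖ = 22 * n → ‖f z‖ ≤ M) {w : ℝ} (hw₀ : 0 ≤ w) (hw : w ≤ 2 * n) :
    ‖f w‖ ≤ M / 10 ^ (n * K) + 2 * n * η * 261 ^ (n * K) := by
  have hnR : (1 : ℝ) ≤ n := by exact_mod_cast hn
  set H := hermiteInterpolant K (range n) oddNode fun i => taylorSeries f (oddNode i)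
  set B : ℝ := n * η * 261 ^ (n * K)
  have hHB : ∀ z : ℂ, ‖z‖ ≤ 22 * n → ‖H.eval z‖ ≤ B := fun z =>
    norm_eval_hermiteInterpolant_oddNode_le hη
  have hwnorm : ‖(w : ℂ)‖ = w := Complex.norm_of_nonneg hw₀
  have hB : 0 ≤ B := (norm_nonneg _).trans (hHB w (by linarith))
  have hnodes : ∀ i ∈ range n, (i : ℝ) + 1 ≤ n := fun i hi => by exact_mod_cast mem_range.mp hi
  have hdiff : ‖f w - H.eval (w : ℂ)‖ ≤ (M + B) * (2 * n / (20 * n)) ^ (#(range n) * K) := by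
    refine norm_le_mul_div_pow_of_le_analyticOrderAt (F := fun z => f z - H.eval z)
      (hf.sub H.differentiable) oddNode_injective.injOn
      (fun i hi => natCast_le_analyticOrderAt_sub_eval_hermiteInterpolant hf
        oddNode_injective.injOn hi) (ρ := 22 * n) (by positivity) (by linarith)
      (fun i hi => ?_) (fun z hz i hi => ?_)
      fun z hz => (norm_sub_le _ _).trans (add_le_add (hM z hz) (hHB z hz.le))
    · rw [oddNode_eq_ofReal, ← Complex.ofReal_sub, Complex.norm_real, Real.norm_eq_abs, abs_le]
      constructor <;> linarith [hnodes i hi, i.cast_nonneg (α := ℝ)]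
    · linarith [norm_sub_norm_le z (oddNode i), norm_oddNode i, hnodes i hi]
  have hratio : (2 * n / (20 * n) : ℝ) ^ (#(range n) * K) = (10 ^ (n * K))⁻¹ := by
    rw [card_range, ← inv_pow]
    congr 1
    field_simp
    norm_num
  calc ‖f w‖ ≤ ‖f w - H.eval (w : ℂ)‖ + ‖H.eval (w : ℂ)‖ := by
        simpa using norm_add_le (f w - H.eval (w : ℂ)) (H.eval (w : ℂ))
    _ ≤ (M + B) * (10 ^ (n * K))⁻¹ + B :=
        add_le_add (hratio ▸ hdiff) (hHB w (by linarith))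
    _ ≤ M / 10 ^ (n * K) + 2 * B := by
        have : B * (10 ^ (n * K))⁻¹ ≤ B :=
          mul_le_of_le_one_right hB (inv_le_one_of_one_le₀ (one_le_pow₀ (by norm_num)))
        rw [add_mul, ← div_eq_mul_inv]
        linarith
    _ = M / 10 ^ (n * K) + 2 * n * η * 261 ^ (n * K) := by ring

end OddNodes

section ExponentialSums

open Finset

variable {α : Type*} {S : Finset α} {X Y : α → ℝ} {T : ℕ} {w : α → ℝ}

/-- All monomials in `X`, `Y` of degree less than `T` are annihilated by the weight `w`. -/
def MomentsVanish (S : Finset α) (X Y : α → ℝ) (T : ℕ) (w : α → ℝ) : Prop :=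
  ∀ i j : ℕ, i + j < T → ∑ a ∈ S, w a * X a ^ i * Y a ^ j = 0

theorem MomentsVanish.mul_affine (h : MomentsVanish S X Y T w) (u v r : ℝ) :
    MomentsVanish S X Y (T - 1) fun a => w a * (u * X a + v * Y a + r) := by
  intro i j hij
  have hX := h (i + 1) j (by lia)
  have hY := h i (j + 1) (by lia)
  have h₀ := h i j (by lia)
  calc _ = u * ∑ a ∈ S, w a * X a ^ (i + 1) * Y a ^ j +
        v * ∑ a ∈ S, w a * X a ^ i * Y a ^ (j + 1) + r * ∑ a ∈ S, w a * X a ^ i * Y a ^ j := by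
        simp only [mul_sum, ← sum_add_distrib]
        exact sum_congr rfl fun a _ => by ring
    _ = 0 := by rw [hX, hY, h₀]; ring

theorem MomentsVanish.mul_affine_pow (h : MomentsVanish S X Y T w) (u v r : ℝ) (k : ℕ) :
    MomentsVanish S X Y (T - k) fun a => w a * (u * X a + v * Y a + r) ^ k := by
  induction k with
  | zero => simpa using h
  | succ k ih => simpa only [mul_assoc, ← pow_succ, Nat.sub_sub] using ih.mul_affine u v r

theorem MomentsVanish.sum_eq_zero (h : MomentsVanish S X Y T w) (hT : 0 < T) :
    ∑ a ∈ S, w a = 0 := by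
  simpa using h 0 0 hT

theorem MomentsVanish.affine {X' Y' : α → ℝ} (h : MomentsVanish S X Y T w)
    (u₁ v₁ r₁ u₂ v₂ r₂ : ℝ) (hX : ∀ a, X' a = u₁ * X a + v₁ * Y a + r₁)
    (hY : ∀ a, Y' a = u₂ * X a + v₂ * Y a + r₂) : MomentsVanish S X' Y' T w := by
  intro i j hij
  simp only [hX, hY]
  exact ((h.mul_affine_pow u₁ v₁ r₁ i).mul_affine_pow u₂ v₂ r₂ j).sum_eq_zero (by lia)

theorem MomentsVanish.abs_sum_mul_pow_le (h : MomentsVanish S X Y T w) {θ : α → ℝ}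
    {κ₁ κ₂ E e A : ℝ} (hE : 0 ≤ E) (he₀ : 0 ≤ e) (he₁ : e ≤ 1) (hθ : ∀ a ∈ S, |θ a| ≤ E)
    (he : ∀ a ∈ S, |θ a - (κ₁ * X a + κ₂ * Y a)| ≤ e) (hA : ∑ a ∈ S, |w a| ≤ A) {t : ℕ}
    (ht : t < T) : |∑ a ∈ S, w a * θ a ^ t| ≤ A * (e * (t * (E + 1) ^ (t - 1))) := by
  have hform : ∑ a ∈ S, w a * (κ₁ * X a + κ₂ * Y a) ^ t = 0 := by
    simpa using (h.mul_affine_pow κ₁ κ₂ 0 t).sum_eq_zero (by lia)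
  have hdiff : ∑ a ∈ S, w a * θ a ^ t =
      ∑ a ∈ S, w a * (θ a ^ t - (κ₁ * X a + κ₂ * Y a) ^ t) := by
    simp only [mul_sub, sum_sub_distrib, hform, sub_zero]
  have hterm : ∀ a ∈ S, |w a * (θ a ^ t - (κ₁ * X a + κ₂ * Y a) ^ t)| ≤
      |w a| * (e * (t * (E + 1) ^ (t - 1))) := by
    intro a ha
    have hmax : max |θ a| |κ₁ * X a + κ₂ * Y a| ≤ E + 1 := by
      refine max_le (by linarith [hθ a ha]) ?_
      linarith [abs_sub_abs_le_abs_sub (κ₁ * X a + κ₂ * Y a) (θ a),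
        abs_sub_comm (θ a) (κ₁ * X a + κ₂ * Y a), hθ a ha, he a ha]
    rw [abs_mul]
    gcongr
    calc _ ≤ |θ a - (κ₁ * X a + κ₂ * Y a)| * t * max |θ a| |κ₁ * X a + κ₂ * Y a| ^ (t - 1) :=
          abs_pow_sub_pow_le _ _ t
      _ ≤ e * t * (E + 1) ^ (t - 1) := by
          gcongr
          exact he a ha
      _ = e * (t * (E + 1) ^ (t - 1)) := mul_assoc ..
  rw [hdiff]
  calc _ ≤ ∑ a ∈ S, |w a * (θ a ^ t - (κ₁ * X a + κ₂ * Y a) ^ t)| := abs_sum_le_sum_abs _ _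
    _ ≤ ∑ a ∈ S, |w a| * (e * (t * (E + 1) ^ (t - 1))) := sum_le_sum hterm
    _ ≤ A * (e * (t * (E + 1) ^ (t - 1))) := by
        rw [← sum_mul]
        gcongr

theorem sum_range_natCast_mul_pow_div_factorial_le {E : ℝ} (hE : 0 ≤ E) (K : ℕ) :
    ∑ t ∈ range K, t * E ^ (t - 1) / t.factorial ≤ Real.exp E := by
  cases K with
  | zero => simpa using (Real.exp_pos E).le
  | succ K =>
    rw [sum_range_succ', Nat.cast_zero, zero_mul, zero_div, add_zero]
    refine (sum_le_sum fun t _ => le_of_eq ?_).trans (Real.sum_le_exp_of_nonneg hE K)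
    rw [Nat.factorial_succ, Nat.add_sub_cancel]
    push_cast
    field_simp

theorem coeff_taylorSeries_sum_exp (c θ : α → ℝ) (x : ℝ) (t : ℕ) :
    (taylorSeries (fun z => ∑ a ∈ S, (c a : ℂ) * Complex.exp (θ a * z)) x).coeff t =
      (((∑ a ∈ S, c a * Real.exp (θ a * x) * θ a ^ t) / t.factorial : ℝ) : ℂ) := by
  rw [taylorSeries, PowerSeries.coeff_mk, iteratedDeriv_fun_sum fun a _ => by fun_prop]
  push_cast
  congr 1
  refine sum_congr rfl fun a _ => ?_
  rw [iteratedDeriv_const_mul_field, iteratedDeriv_cexp_const_mul]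
  ring

theorem truncNorm_taylorSeries_sum_exp_le {c θ : α → ℝ} {κ₁ κ₂ E e A x : ℝ}
    (hE : 0 ≤ E) (he₀ : 0 ≤ e) (he₁ : e ≤ 1) (hθ : ∀ a ∈ S, |θ a| ≤ E)
    (he : ∀ a ∈ S, |θ a - (κ₁ * X a + κ₂ * Y a)| ≤ e)
    (hA : ∑ a ∈ S, |c a * Real.exp (θ a * x)| ≤ A)
    (h : MomentsVanish S X Y T fun a => c a * Real.exp (θ a * x)) :
    truncNorm T (taylorSeries (fun z => ∑ a ∈ S, (c a : ℂ) * Complex.exp (θ a * z)) x) ≤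
      A * (e * Real.exp (E + 1)) := by
  have hA₀ : 0 ≤ A := (sum_nonneg fun _ _ => abs_nonneg _).trans hA
  calc _ ≤ ∑ t ∈ range T, A * (e * (t * (E + 1) ^ (t - 1) / t.factorial)) := by
        refine sum_le_sum fun t ht => ?_
        rw [coeff_taylorSeries_sum_exp, Complex.norm_real, norm_div, Real.norm_natCast,
          Real.norm_eq_abs]
        refine (div_le_div_of_nonneg_right (h.abs_sum_mul_pow_le hE he₀ he₁ hθ he hA
          (mem_range.mp ht)) (Nat.cast_nonneg _)).trans_eq ?_
        ring
    _ ≤ A * (e * Real.exp (E + 1)) := by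
        rw [← mul_sum, ← mul_sum]
        gcongr
        exact sum_range_natCast_mul_pow_div_factorial_le (by linarith) T

theorem norm_sum_exp_le {c θ : α → ℝ} {E A r : ℝ} (hθ : ∀ a ∈ S, |θ a| ≤ E)
    (hA : ∑ a ∈ S, |c a| ≤ A) {z : ℂ} (hz : ‖z‖ ≤ r) :
    ‖∑ a ∈ S, (c a : ℂ) * Complex.exp (θ a * z)‖ ≤ A * Real.exp (E * r) := by
  have hterm : ∀ a ∈ S, ‖(c a : ℂ) * Complex.exp (θ a * z)‖ ≤ |c a| * Real.exp (E * r) := by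
    intro a ha
    rw [norm_mul, Complex.norm_real, Real.norm_eq_abs]
    gcongr
    refine (Complex.norm_exp_le_exp_norm _).trans (Real.exp_le_exp.mpr ?_)
    rw [norm_mul, Complex.norm_real, Real.norm_eq_abs]
    exact mul_le_mul (hθ a ha) hz (norm_nonneg z) ((abs_nonneg _).trans (hθ a ha))
  refine (norm_sum_le_of_le _ hterm).trans ?_
  rw [← sum_mul]
  gcongr

theorem abs_sum_exp_le_of_momentsVanish {c θ : α → ℝ} {κ₁ κ₂ E e A : ℝ} {n : ℕ} (hn : 1 ≤ n)
    (hE : 0 ≤ E) (he₀ : 0 ≤ e) (he₁ : e ≤ 1) (hθ : ∀ a ∈ S, |θ a| ≤ E)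
    (he : ∀ a ∈ S, |θ a - (κ₁ * X a + κ₂ * Y a)| ≤ e) (hA : ∑ a ∈ S, |c a| ≤ A)
    (h : ∀ s < n, MomentsVanish S X Y T fun a => c a * Real.exp (θ a * (2 * s + 1)))
    {w : ℝ} (hw₀ : 0 ≤ w) (hw : w ≤ 2 * n) :
    |∑ a ∈ S, c a * Real.exp (θ a * w)| ≤ A * Real.exp (E * (22 * n)) / 10 ^ (n * T) +
      2 * n * (A * Real.exp (E * (2 * n)) * (e * Real.exp (E + 1))) * 261 ^ (n * T) := by
  have hreal : (∑ a ∈ S, (c a : ℂ) * Complex.exp (θ a * w)) =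
      ((∑ a ∈ S, c a * Real.exp (θ a * w) : ℝ) : ℂ) := by simp
  rw [← Real.norm_eq_abs, ← Complex.norm_real, ← hreal]
  refine norm_le_of_truncNorm_taylorSeries_le
    (f := fun z => ∑ a ∈ S, (c a : ℂ) * Complex.exp (θ a * z)) hn (by fun_prop)
    (fun s hs => ?_) (fun z hz => norm_sum_exp_le hθ hA hz.le) hw₀ hw
  have hsn : (s : ℝ) + 1 ≤ n := by exact_mod_cast hs
  rw [oddNode_eq_ofReal]
  refine truncNorm_taylorSeries_sum_exp_le hE he₀ he₁ hθ he ?_ (h s hs)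
  calc _ ≤ ∑ a ∈ S, |c a| * Real.exp (E * (2 * n)) := by
        gcongr with a ha
        rw [abs_mul, Real.abs_exp]
        gcongr ?_ * Real.exp ?_
        exact mul_le_mul ((le_abs_self _).trans (hθ a ha)) (by linarith) (by positivity) hE
    _ ≤ A * Real.exp (E * (2 * n)) := by
        rw [← sum_mul]
        gcongr

end ExponentialSums

section LinearForms

open Finset Real

/-- The linear form whose coefficients are the logarithms of `2`, `3` and `φ`. -/
noncomputable def logForm (μ : Fin 3 → ℕ) : ℝ := ∑ i, μ i * log (base i)

/-- The linear form with integer coefficients `u`. -/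
def intForm (u : Fin 3 → ℤ) (μ : Fin 3 → ℕ) : ℤ := ∑ i, u i * μ i

/-- The box of exponents `0 ≤ μ i < L`. -/
def expBox (L : ℕ) : Finset (Fin 3 → ℕ) := Fintype.piFinset fun _ => range L

theorem mem_expBox {L : ℕ} {μ : Fin 3 → ℕ} : μ ∈ expBox L ↔ ∀ i, μ i < L := by
  simp [expBox]

theorem card_expBox (L : ℕ) : (expBox L).card = L ^ 3 := by
  simp [expBox]

theorem expBox_mono {L L' : ℕ} (h : L ≤ L') : expBox L ⊆ expBox L' := fun _ hμ =>
  mem_expBox.mpr fun i => (mem_expBox.mp hμ i).trans_le h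

theorem two_smul_add_mem_expBox {L : ℕ} {ν ε : Fin 3 → ℕ} (hν : ν ∈ expBox L)
    (hε : ∀ i, ε i < 2) : 2 • ν + ε ∈ expBox (2 * L) :=
  mem_expBox.mpr fun i => by
    have := mem_expBox.mp hν i
    have := hε i
    simp only [Pi.add_apply, Pi.smul_apply, smul_eq_mul]
    lia

theorem sum_expBox_mod_two_eq {L : ℕ} {ε : Fin 3 → ℕ} (hε : ∀ i, ε i < 2)
    (f : (Fin 3 → ℕ) → ℝ) :
    ∑ μ ∈ expBox (2 * L) with ∀ i, μ i % 2 = ε i, f μ = ∑ ν ∈ expBox L, f (2 • ν + ε) := by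
  symm
  refine sum_bij (fun ν _ => 2 • ν + ε) (fun ν hν => mem_filter.mpr
    ⟨two_smul_add_mem_expBox hν hε, fun i => ?_⟩) (fun ν _ ν' _ h => ?_) (fun μ hμ => ?_)
    fun _ _ => rfl
  · simp [Nat.mod_eq_of_lt (hε i)]
  · exact smul_right_injective _ two_ne_zero (add_right_cancel h)
  · obtain ⟨hμ, hmod⟩ := mem_filter.mp hμ
    refine ⟨fun i => μ i / 2, mem_expBox.mpr fun i => ?_, funext fun i => ?_⟩
    · have := mem_expBox.mp hμ i
      lia
    · simp [← hmod i, Nat.div_add_mod]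

theorem log_base_nonneg (i : Fin 3) : 0 ≤ log (base i) :=
  log_nonneg (one_lt_base i).le

theorem sum_log_base_le : ∑ i, log (base i) ≤ 5 / 2 := by
  have hphi : log goldenRatio ≤ log 2 := log_le_log goldenRatio_pos goldenRatio_lt_two.le
  have hthree : log 3 ≤ 1.1 := by
    have := (abs_le.mp log_three_near_10).2
    norm_num at this ⊢
    linarith
  have := log_two_lt_d9
  simp only [base, Fin.sum_univ_three, Matrix.cons_val]
  norm_num at *
  linarith

theorem logForm_nonneg (μ : Fin 3 → ℕ) : 0 ≤ logForm μ :=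
  sum_nonneg fun i _ => mul_nonneg (Nat.cast_nonneg _) (log_base_nonneg i)

theorem logForm_le {L : ℕ} {μ : Fin 3 → ℕ} (hμ : μ ∈ expBox L) : logForm μ ≤ 5 / 2 * L :=
  calc logForm μ ≤ ∑ i, L * log (base i) := sum_le_sum fun i _ =>
        mul_le_mul_of_nonneg_right (mod_cast (mem_expBox.mp hμ i).le) (log_base_nonneg i)
    _ = L * ∑ i, log (base i) := (mul_sum ..).symm
    _ ≤ L * (5 / 2) := by gcongr; exact sum_log_base_le
    _ = 5 / 2 * L := mul_comm ..

theorem logForm_two_smul_add (ν ε : Fin 3 → ℕ) :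
    logForm (2 • ν + ε) = 2 * logForm ν + logForm ε := by
  simp [logForm, mul_sum, add_mul, sum_add_distrib, mul_assoc]

theorem intForm_two_smul_add (u : Fin 3 → ℤ) (ν ε : Fin 3 → ℕ) :
    intForm u (2 • ν + ε) = 2 * intForm u ν + intForm u ε := by
  simp [intForm, mul_sum, mul_add, sum_add_distrib, mul_left_comm]

theorem exp_logForm_mul (μ : Fin 3 → ℕ) (w : ℝ) :
    exp (logForm μ * w) = ∏ i, (base i ^ w) ^ μ i := by
  simp only [logForm, sum_mul, exp_sum]
  refine prod_congr rfl fun i _ => ?_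
  rw [rpow_def_of_pos (base_pos i), ← exp_nat_mul, mul_assoc]

theorem prod_sqrt_base_pow (μ : Fin 3 → ℕ) (k : ℕ) :
    ∏ i, √(base i) ^ (μ i * k) = exp (logForm μ * (k / 2)) := by
  rw [exp_logForm_mul]
  refine prod_congr rfl fun i _ => ?_
  rw [sqrt_eq_rpow, mul_comm, pow_mul, ← rpow_mul_natCast (base_pos i).le, one_div_mul_eq_div]

theorem sum_two_smul_add_eq_zero {c : (Fin 3 → ℕ) → ℤ} {L s : ℕ} {M : ℝ}
    (hM : ∑ μ ∈ expBox (2 * L), |(c μ : ℝ)| * exp (logForm μ * ((2 * s + 1) / 2)) ≤ M)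
    (hsmall : |∑ μ ∈ expBox (2 * L), c μ * exp (logForm μ * ((2 * s + 1) / 2))| * M ^ 15 < 1)
    {ε : Fin 3 → ℕ} (hε : ∀ i, ε i < 2) :
    ∑ ν ∈ expBox L, c (2 • ν + ε) * exp (logForm ν * (2 * s + 1)) = 0 := by
  have hprod (μ : Fin 3 → ℕ) :
      exp (logForm μ * ((2 * s + 1) / 2)) = ∏ i, √(base i) ^ (μ i * (2 * s + 1)) := by
    rw [prod_sqrt_base_pow]
    push_cast
    rfl
  have hparity (μ : Fin 3 → ℕ) (i : Fin 3) : μ i * (2 * s + 1) % 2 = μ i % 2 := by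
    rw [show μ i * (2 * s + 1) = μ i + 2 * (μ i * s) by ring, Nat.add_mul_mod_self_left]
  have hclass : ∑ ν ∈ expBox L,
      c (2 • ν + ε) * exp (logForm (2 • ν + ε) * ((2 * s + 1) / 2)) = 0 := by
    simp only [hprod] at hM hsmall ⊢
    rw [← sum_expBox_mod_two_eq hε fun μ => c μ * ∏ i, √(base i) ^ (μ i * (2 * s + 1))]
    simpa only [hparity] using sum_parity_class_eq_zero _ c _ hM hsmall hε
  refine (mul_eq_zero.mp ((mul_sum ..).trans (Eq.trans (sum_congr rfl fun ν _ => ?_) hclass)))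
    |>.resolve_left (exp_pos (logForm ε * ((2 * s + 1) / 2))).ne'
  rw [logForm_two_smul_add, mul_left_comm, ← exp_add]
  ring_nf

end LinearForms

section AuxiliaryFunctions

open Finset Real

/-- The coefficients `p` form a nonzero exponential polynomial with exponents below `L` and
coefficients at most `P`, which vanishes to order `T` along two integer forms at the first `n`
odd integers. -/
structure AuxiliaryFunction (u v : Fin 3 → ℤ) (p : (Fin 3 → ℕ) → ℤ) (P : ℝ) (L T n : ℕ) :
    Prop where
  exists_ne_zero : ∃ μ ∈ expBox L, p μ ≠ 0
  abs_le : ∀ μ ∈ expBox L, |(p μ : ℝ)| ≤ P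
  momentsVanish : ∀ s < n, MomentsVanish (expBox L) (fun μ => (intForm u μ : ℝ))
    (fun μ => (intForm v μ : ℝ)) T fun μ => p μ * exp (logForm μ * (2 * s + 1))

/-- The coordinates (`b = 1` and `b = 0`) of `2 ^ (k * μ 0) * 3 ^ (k * μ 1) * φ ^ (k * μ 2)` with
respect to the basis `1`, `-ψ` of `ℤ[φ]`, where `ψ` is the conjugate of `φ`. -/
def goldenCoord (μ : Fin 3 → ℕ) (k b : ℕ) : ℕ :=
  2 ^ (k * μ 0) * 3 ^ (k * μ 1) * Nat.fib (k * μ 2 + b)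

theorem goldenCoord_one_sub (μ : Fin 3 → ℕ) (k : ℕ) :
    goldenCoord μ k 1 - goldenConj * goldenCoord μ k 0 = exp (logForm μ * k) := by
  simp only [exp_logForm_mul, rpow_natCast, ← pow_mul, Fin.prod_univ_three, base,
    Matrix.cons_val, ← fib_succ_sub_goldenConj_mul_fib, goldenCoord]
  push_cast
  rw [add_zero]
  ring

theorem goldenCoord_le (μ : Fin 3 → ℕ) (k : ℕ) {b : ℕ} (hb : b ≤ 1) :
    goldenCoord μ k b ≤ exp (logForm μ * k) := by
  have hmono : (goldenCoord μ k b : ℝ) ≤ goldenCoord μ k 1 := by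
    exact_mod_cast Nat.mul_le_mul_left _ (Nat.fib_mono (by lia))
  rw [← goldenCoord_one_sub]
  linarith [mul_nonneg (neg_nonneg.mpr goldenConj_neg.le) (goldenCoord μ k 0).cast_nonneg]

theorem abs_pow_mul_pow_le {x y B : ℝ} (hB : 1 ≤ B) (hx : |x| ≤ B) (hy : |y| ≤ B) {i j K : ℕ}
    (hij : i + j ≤ K) : |x ^ i * y ^ j| ≤ B ^ K :=
  calc |x ^ i * y ^ j| = |x| ^ i * |y| ^ j := by rw [abs_mul, abs_pow, abs_pow]
    _ ≤ B ^ i * B ^ j := by gcongr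
    _ = B ^ (i + j) := (pow_add ..).symm
    _ ≤ B ^ K := pow_le_pow_right₀ hB hij

theorem exists_small_int_solution {α β : Type*} [Fintype α] [Nonempty α] [Fintype β]
    (A : Matrix α β ℤ) {M : ℝ} (hM : 1 ≤ M) (hA : ∀ i j, |(A i j : ℝ)| ≤ M)
    (hcard : 5 * Fintype.card α ≤ Fintype.card β) :
    ∃ t : β → ℤ, t ≠ 0 ∧ A.mulVec t = 0 ∧
      ∀ j, |(t j : ℝ)| ≤ (Fintype.card β * M) ^ (1 / 4 : ℝ) := by
  let _ : SeminormedAddCommGroup (Matrix α β ℤ) := Matrix.seminormedAddCommGroup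
  have hα : 0 < Fintype.card α := Fintype.card_pos
  obtain ⟨t, ht₀, ht, hnorm⟩ := Int.Matrix.exists_ne_zero_int_vec_norm_le A (by lia) hα
  have hAM : ‖A‖ ≤ M := (Matrix.norm_le_iff (by linarith)).mpr fun i j => by
    simpa only [Int.norm_eq_abs] using hA i j
  have hα' : (0 : ℝ) < Fintype.card α := mod_cast hα
  have hcard' : 5 * (Fintype.card α : ℝ) ≤ Fintype.card β := mod_cast hcard
  have hβ : (1 : ℝ) ≤ Fintype.card β := mod_cast (by lia : 1 ≤ Fintype.card β)
  refine ⟨t, ht₀, ht, fun j => ?_⟩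
  calc |(t j : ℝ)| = ‖t j‖ := (Int.norm_eq_abs _).symm
    _ ≤ ‖t‖ := norm_le_pi_norm t j
    _ ≤ (Fintype.card β * max 1 ‖A‖) ^
        ((Fintype.card α : ℝ) / (Fintype.card β - Fintype.card α)) := hnorm
    _ ≤ (Fintype.card β * M) ^ ((Fintype.card α : ℝ) / (Fintype.card β - Fintype.card α)) := by
        refine rpow_le_rpow (by positivity) ?_ (div_nonneg hα'.le (by linarith))
        gcongr
        exact max_le hM hAM
    _ ≤ (Fintype.card β * M) ^ (1 / 4 : ℝ) := by
        refine rpow_le_rpow_of_exponent_le (one_le_mul_of_one_le_of_one_le hβ hM) ?_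
        rw [div_le_div_iff₀ (by linarith) (by norm_num)]
        linarith

/-- The linear system for the coefficients of an auxiliary function: row `((i, j), s, b)` is
coordinate `b` of the moment of bidegree `(i, j)` at the odd integer `2 * s + 1`. -/
def momentMatrix (u v : Fin 3 → ℤ) (L T n : ℕ) :
    Matrix ({ij : Fin T × Fin T // (ij.1 + ij.2 : ℕ) < T} × Fin n × Fin 2) (expBox L) ℤ :=
  fun r μ => intForm u μ ^ (r.1.1.1 : ℕ) * intForm v μ ^ (r.1.1.2 : ℕ) *
    goldenCoord μ (2 * r.2.1 + 1) r.2.2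

variable {u v : Fin 3 → ℤ} {B : ℝ} {L : ℕ}

theorem abs_momentMatrix_le {T n : ℕ} (hB : 1 ≤ B)
    (hu : ∀ μ ∈ expBox L, |(intForm u μ : ℝ)| ≤ B) (hv : ∀ μ ∈ expBox L, |(intForm v μ : ℝ)| ≤ B)
    (r) (μ) : |(momentMatrix u v L T n r μ : ℝ)| ≤ B ^ T * exp (5 * L * n) := by
  obtain ⟨⟨⟨i, j⟩, hij⟩, s, b⟩ := r
  have hs : ((2 * s + 1 : ℕ) : ℝ) ≤ 2 * n := by
    exact_mod_cast (by lia : 2 * (s : ℕ) + 1 ≤ 2 * n)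
  have hcoord : (goldenCoord μ (2 * s + 1) b : ℝ) ≤ exp (5 * L * n) := by
    refine (goldenCoord_le μ _ (Nat.lt_succ_iff.mp b.2)).trans (exp_le_exp.mpr ?_)
    calc logForm μ * (2 * s + 1 : ℕ) ≤ 5 / 2 * L * (2 * n) := by
          gcongr
          exact logForm_le μ.2
      _ = 5 * L * n := by ring
  simp only [momentMatrix, Int.cast_mul, Int.cast_pow, Int.cast_natCast]
  rw [abs_mul, Nat.abs_cast]
  gcongr
  exact abs_pow_mul_pow_le hB (hu μ μ.2) (hv μ μ.2) hij.le

theorem momentsVanish_of_mulVec_eq_zero {T n : ℕ} {p : (Fin 3 → ℕ) → ℤ}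
    (hp : (momentMatrix u v L T n).mulVec (fun μ => p μ) = 0) {s : ℕ} (hs : s < n) :
    MomentsVanish (expBox L) (fun μ => (intForm u μ : ℝ)) (fun μ => (intForm v μ : ℝ)) T
      fun μ => p μ * exp (logForm μ * (2 * s + 1)) := by
  intro i j hij
  have hrow (b : Fin 2) : ∑ μ ∈ expBox L, (intForm u μ : ℝ) ^ i * intForm v μ ^ j *
      goldenCoord μ (2 * s + 1) b * p μ = 0 := by
    have := congrFun hp (⟨(⟨i, by lia⟩, ⟨j, by lia⟩), hij⟩, ⟨s, hs⟩, b)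
    simp only [Matrix.mulVec, dotProduct, momentMatrix] at this
    rw [← sum_coe_sort]
    exact_mod_cast this
  calc _ = ∑ μ ∈ expBox L, (intForm u μ : ℝ) ^ i * intForm v μ ^ j *
          goldenCoord μ (2 * s + 1) (1 : Fin 2) * p μ -
        goldenConj * ∑ μ ∈ expBox L, (intForm u μ : ℝ) ^ i * intForm v μ ^ j *
          goldenCoord μ (2 * s + 1) (0 : Fin 2) * p μ := by
        rw [mul_sum, ← sum_sub_distrib]
        refine sum_congr rfl fun μ _ => ?_
        have := goldenCoord_one_sub μ (2 * s + 1)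
        push_cast at this
        simp only [← this, Fin.val_one, Fin.val_zero]
        ring
    _ = 0 := by rw [hrow, hrow, mul_zero, sub_zero]

theorem exists_auxiliaryFunction {T n : ℕ} (hB : 1 ≤ B) (hT : 1 ≤ T) (hn : 1 ≤ n)
    (hu : ∀ μ ∈ expBox L, |(intForm u μ : ℝ)| ≤ B) (hv : ∀ μ ∈ expBox L, |(intForm v μ : ℝ)| ≤ B)
    (hcard : 5 * (T ^ 2 * (n * 2)) ≤ L ^ 3) :
    ∃ p, AuxiliaryFunction u v p ((L ^ 3 * (B ^ T * exp (5 * L * n))) ^ (1 / 4 : ℝ)) L T n := by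
  have : NeZero T := ⟨by lia⟩
  have : NeZero n := ⟨by lia⟩
  have : Nonempty {ij : Fin T × Fin T // (ij.1 + ij.2 : ℕ) < T} := ⟨(0, 0), by simpa⟩
  have hM : 1 ≤ B ^ T * exp (5 * L * n) :=
    one_le_mul_of_one_le_of_one_le (one_le_pow₀ hB) (one_le_exp (by positivity))
  have hdegrees : Fintype.card {ij : Fin T × Fin T // (ij.1 + ij.2 : ℕ) < T} ≤ T ^ 2 :=
    (Fintype.card_subtype_le _).trans_eq (by simp [sq])
  obtain ⟨t, ht₀, ht, hbound⟩ := exists_small_int_solution (momentMatrix u v L T n) hM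
    (abs_momentMatrix_le hB hu hv) (by
      simp only [Fintype.card_prod, Fintype.card_fin, Fintype.card_coe, card_expBox]
      exact (by gcongr : _ ≤ 5 * (T ^ 2 * (n * 2))).trans hcard)
  rw [Fintype.card_coe, card_expBox, Nat.cast_pow] at hbound
  let p (μ : Fin 3 → ℕ) : ℤ := if h : μ ∈ expBox L then t ⟨μ, h⟩ else 0
  have hp (μ : expBox L) : p μ = t μ := dif_pos μ.2
  refine ⟨p, ?_, fun μ hμ => ?_, fun s hs => momentsVanish_of_mulVec_eq_zero ?_ hs⟩
  · obtain ⟨μ, hμ⟩ := Function.ne_iff.mp ht₀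
    exact ⟨μ, μ.2, (hp μ).trans_ne hμ⟩
  · simpa only [hp ⟨μ, hμ⟩] using hbound ⟨μ, hμ⟩
  · simpa only [hp] using ht

end AuxiliaryFunctions

section Descent

open Finset Real

/-- The integer forms `u` and `v` are at most `B` on the box of exponents below `L`, and one of
their real linear combinations approximates `logForm` there with error at most `e`. -/
structure NearlySpanLogForm (u v : Fin 3 → ℤ) (B e : ℝ) (L : ℕ) : Prop where
  abs_left_le : ∀ μ ∈ expBox L, |(intForm u μ : ℝ)| ≤ B
  abs_right_le : ∀ μ ∈ expBox L, |(intForm v μ : ℝ)| ≤ B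
  exists_abs_sub_le : ∃ κ₁ κ₂ : ℝ, ∀ μ ∈ expBox L,
    |logForm μ - (κ₁ * intForm u μ + κ₂ * intForm v μ)| ≤ e

variable {u v : Fin 3 → ℤ} {B : ℝ}

theorem NearlySpanLogForm.mono {e : ℝ} {L L' : ℕ} (h : NearlySpanLogForm u v B e L')
    (hL : L ≤ L') : NearlySpanLogForm u v B e L := by
  obtain ⟨κ₁, κ₂, happrox⟩ := h.exists_abs_sub_le
  have hsub := expBox_mono hL
  exact ⟨fun μ hμ => h.abs_left_le μ (hsub hμ), fun μ hμ => h.abs_right_le μ (hsub hμ),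
    κ₁, κ₂, fun μ hμ => happrox μ (hsub hμ)⟩

/-- The coefficients of an exponential polynomial after it is weighted by the monomial of bidegree
`(i, j)` in the forms `u` and `v`. -/
def momentCoeff (u v : Fin 3 → ℤ) (p : (Fin 3 → ℕ) → ℤ) (i j : ℕ) (μ : Fin 3 → ℕ) : ℤ :=
  p μ * intForm u μ ^ i * intForm v μ ^ j

variable {p : (Fin 3 → ℕ) → ℤ} {P : ℝ} {L T n i j K : ℕ}

theorem AuxiliaryFunction.bound_nonneg (hp : AuxiliaryFunction u v p P L T n) : 0 ≤ P :=
  let ⟨μ, hμ, _⟩ := hp.exists_ne_zero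
  (abs_nonneg _).trans (hp.abs_le μ hμ)

theorem AuxiliaryFunction.sum_abs_momentCoeff_le (hp : AuxiliaryFunction u v p P L T n)
    (hB : 1 ≤ B) {e : ℝ} (hspan : NearlySpanLogForm u v B e L) (hij : i + j ≤ K) :
    ∑ μ ∈ expBox L, |(momentCoeff u v p i j μ : ℝ)| ≤ L ^ 3 * (P * B ^ K) := by
  have hterm : ∀ μ ∈ expBox L, |(momentCoeff u v p i j μ : ℝ)| ≤ P * B ^ K := by
    intro μ hμ
    have hP := hp.bound_nonneg
    simp only [momentCoeff, Int.cast_mul, Int.cast_pow]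
    rw [mul_assoc, abs_mul]
    gcongr
    · exact hp.abs_le μ hμ
    · exact abs_pow_mul_pow_le hB (hspan.abs_left_le μ hμ) (hspan.abs_right_le μ hμ) hij
  refine (sum_le_card_nsmul _ _ _ hterm).trans_eq ?_
  rw [card_expBox, nsmul_eq_mul, Nat.cast_pow]

theorem AuxiliaryFunction.momentsVanish_momentCoeff
    (hp : AuxiliaryFunction u v p P L (2 * K) n) (hij : i + j < K) {s : ℕ} (hs : s < n) :
    MomentsVanish (expBox L) (fun μ => (intForm u μ : ℝ)) (fun μ => (intForm v μ : ℝ)) K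
      fun μ => momentCoeff u v p i j μ * exp (logForm μ * (2 * s + 1)) := by
  intro i' j' hij'
  refine Eq.trans (sum_congr rfl fun μ _ => ?_)
    (hp.momentsVanish s hs (i + i') (j + j') (by lia))
  simp only [momentCoeff, Int.cast_mul, Int.cast_pow]
  ring

theorem exp_two_three_le_ten : exp 2.3 ≤ 10 := by
  refine le_of_pow_le_pow_left₀ (n := 10) (by norm_num) (by norm_num) ?_
  calc exp 2.3 ^ 10 = exp 1 ^ 23 := by
        rw [← exp_nat_mul, ← exp_nat_mul]
        norm_num
    _ ≤ 2.7182818286 ^ 23 := by gcongr; exact exp_one_lt_d9.le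
    _ ≤ 10 ^ 10 := by norm_num

theorem le_exp_six : 261 ≤ exp 6 :=
  calc (261 : ℝ) ≤ 2.7 ^ 6 := by norm_num
    _ ≤ exp 1 ^ 6 := by gcongr; linarith [exp_one_gt_d9]
    _ = exp 6 := by rw [← exp_nat_mul]; norm_num

theorem descent_estimate {N : ℝ} (hN : 1 ≤ N) {m : ℕ} (hm : (m : ℝ) = 256 * N) :
    (exp (26 * N) * exp (55 * N) / 10 ^ m +
      N * (exp (26 * N) * exp (5 * N) * (exp (-(2199 * N)) * exp (6 * N))) * 261 ^ m) *
      (exp (26 * N) * exp (5 * N)) ^ 15 < 1 := by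
  have hten : exp (588 * N) ≤ 10 ^ m :=
    calc exp (588 * N) ≤ exp (m * 2.3) := exp_le_exp.mpr (by linarith)
      _ = exp 2.3 ^ m := exp_nat_mul ..
      _ ≤ 10 ^ m := by gcongr; exact exp_two_three_le_ten
  have hpow : 261 ^ m ≤ exp (1536 * N) :=
    calc 261 ^ m ≤ exp 6 ^ m := by gcongr; exact le_exp_six
      _ = exp (1536 * N) := by rw [← exp_nat_mul, hm]; ring_nf
  have hhermite : exp (26 * N) * exp (55 * N) / 10 ^ m ≤ exp (-(507 * N)) :=
    calc _ ≤ exp (26 * N) * exp (55 * N) / exp (588 * N) := by gcongr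
      _ = exp (-(507 * N)) := by rw [← exp_add, ← exp_sub]; ring_nf
  have hform : N * (exp (26 * N) * exp (5 * N) * (exp (-(2199 * N)) * exp (6 * N))) * 261 ^ m ≤
      exp (-(507 * N)) :=
    calc _ ≤ exp N * (exp (26 * N) * exp (5 * N) * (exp (-(2199 * N)) * exp (6 * N))) *
          exp (1536 * N) := by
          gcongr
          linarith [add_one_le_exp N]
      _ = exp (-(625 * N)) := by simp only [← exp_add]; ring_nf
      _ ≤ exp (-(507 * N)) := exp_le_exp.mpr (by linarith)
  have hliouville : (exp (26 * N) * exp (5 * N)) ^ 15 = exp (465 * N) := by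
    rw [← exp_add, ← exp_nat_mul]
    push_cast
    ring_nf
  rw [hliouville]
  calc _ ≤ (exp (-(507 * N)) + exp (-(507 * N))) * exp (465 * N) := by gcongr
    _ = 2 * exp (-(42 * N)) := by rw [← two_mul, mul_assoc, ← exp_add]; ring_nf
    _ < 1 := by
      have : (exp (42 * N))⁻¹ < 2⁻¹ := by
        gcongr
        linarith [add_one_le_exp (42 * N)]
      rw [exp_neg]
      linarith

theorem AuxiliaryFunction.abs_sum_momentCoeff_mul_lt_one
    (hp : AuxiliaryFunction u v p P (2 * L) (2 * (512 * L)) n) (hL : 1 ≤ L) (hn : 1 ≤ n)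
    (hB : 1 ≤ B) (hspan : NearlySpanLogForm u v B (exp (-(2199 * (2 * L * n)))) (2 * L))
    (hP : (2 * L) ^ 3 * (P * B ^ (512 * L)) ≤ exp (26 * (2 * L * n))) (hij : i + j < 512 * L)
    {w : ℝ} (hw₀ : 0 ≤ w) (hw : w ≤ 2 * n) :
    |∑ μ ∈ expBox (2 * L), momentCoeff u v p i j μ * exp (logForm μ * w)| *
      (exp (26 * (2 * L * n)) * exp (5 * (2 * L * n))) ^ 15 < 1 := by
  obtain ⟨κ₁, κ₂, happrox⟩ := hspan.exists_abs_sub_le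
  have hL' : (1 : ℝ) ≤ L := mod_cast hL
  have hn' : (1 : ℝ) ≤ n := mod_cast hn
  have hLn : (L : ℝ) ≤ L * n := le_mul_of_one_le_right (by positivity) hn'
  have hsum : ∑ μ ∈ expBox (2 * L), |(momentCoeff u v p i j μ : ℝ)| ≤ exp (26 * (2 * L * n)) :=
    (hp.sum_abs_momentCoeff_le hB hspan hij.le).trans (by push_cast; exact hP)
  have hlogForm : ∀ μ ∈ expBox (2 * L), |logForm μ| ≤ 5 * L := fun μ hμ => by
    rw [abs_of_nonneg (logForm_nonneg μ)]
    exact (logForm_le hμ).trans_eq (by push_cast; ring)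
  have hestimate := abs_sum_exp_le_of_momentsVanish (κ₁ := κ₁) (κ₂ := κ₂) hn (by positivity)
    (exp_pos (-(2199 * (2 * L * n : ℝ)))).le (exp_le_one_iff.mpr (by linarith)) hlogForm happrox
    hsum (fun s hs => hp.momentsVanish_momentCoeff hij hs) hw₀ hw
  refine lt_of_le_of_lt ?_
    (descent_estimate (N := 2 * L * n) (m := n * (512 * L)) (by linarith) (by push_cast; ring))
  gcongr
  refine hestimate.trans ?_
  rw [show 5 * (L : ℝ) * (22 * n) = 55 * (2 * L * n) by ring,
    show 5 * (L : ℝ) * (2 * n) = 5 * (2 * L * n) by ring]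
  gcongr
  · linarith
  · linarith

theorem AuxiliaryFunction.sum_momentCoeff_two_smul_add_eq_zero
    (hp : AuxiliaryFunction u v p P (2 * L) (2 * (512 * L)) n) (hL : 1 ≤ L) (hn : 1 ≤ n)
    (hB : 1 ≤ B) (hspan : NearlySpanLogForm u v B (exp (-(2199 * (2 * L * n)))) (2 * L))
    (hP : (2 * L) ^ 3 * (P * B ^ (512 * L)) ≤ exp (26 * (2 * L * n))) (hij : i + j < 512 * L)
    {s : ℕ} (hs : s < 2 * n) {ε : Fin 3 → ℕ} (hε : ∀ i, ε i < 2) :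
    ∑ ν ∈ expBox L, momentCoeff u v p i j (2 • ν + ε) * exp (logForm ν * (2 * s + 1)) = 0 := by
  have hs' : ((2 * s + 1) / 2 : ℝ) ≤ 2 * n := by
    have : (s : ℝ) + 1 ≤ 2 * n := mod_cast hs
    linarith
  refine sum_two_smul_add_eq_zero ?_ (hp.abs_sum_momentCoeff_mul_lt_one hL hn hB hspan hP hij
    (by positivity) hs') hε
  calc _ ≤ ∑ μ ∈ expBox (2 * L), |(momentCoeff u v p i j μ : ℝ)| * exp (5 * (2 * L * n)) := by
        refine sum_le_sum fun μ hμ =>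
          mul_le_mul_of_nonneg_left (exp_le_exp.mpr ?_) (abs_nonneg _)
        calc logForm μ * ((2 * s + 1) / 2) ≤ 5 / 2 * (2 * L : ℕ) * (2 * n) := by
              gcongr
              exact logForm_le hμ
          _ = 5 * (2 * L * n) := by push_cast; ring
    _ ≤ exp (26 * (2 * L * n)) * exp (5 * (2 * L * n)) := by
        rw [← sum_mul]
        gcongr
        exact (hp.sum_abs_momentCoeff_le hB hspan hij.le).trans (by push_cast; exact hP)

theorem AuxiliaryFunction.exists_halve
    (hp : AuxiliaryFunction u v p P (2 * L) (2 * (512 * L)) n) (hL : 1 ≤ L) (hn : 1 ≤ n)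
    (hB : 1 ≤ B) (hspan : NearlySpanLogForm u v B (exp (-(2199 * (2 * L * n)))) (2 * L))
    (hP : (2 * L) ^ 3 * (P * B ^ (512 * L)) ≤ exp (26 * (2 * L * n))) :
    ∃ p', AuxiliaryFunction u v p' P L (512 * L) (2 * n) := by
  obtain ⟨μ₀, hμ₀, hpμ₀⟩ := hp.exists_ne_zero
  let ε (i : Fin 3) : ℕ := μ₀ i % 2
  have hε (i : Fin 3) : ε i < 2 := Nat.mod_lt _ two_pos
  refine ⟨fun ν => p (2 • ν + ε), ⟨fun i => μ₀ i / 2, mem_expBox.mpr fun i => ?_, ?_⟩,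
    fun ν hν => hp.abs_le _ (two_smul_add_mem_expBox hν hε), fun s hs => ?_⟩
  · have := mem_expBox.mp hμ₀ i
    lia
  · convert hpμ₀
    exact funext fun i => Nat.div_add_mod (μ₀ i) 2
  have hmoments : MomentsVanish (expBox L) (fun ν => (intForm u (2 • ν + ε) : ℝ))
      (fun ν => (intForm v (2 • ν + ε) : ℝ)) (512 * L)
      fun ν => p (2 • ν + ε) * exp (logForm ν * (2 * s + 1)) := by
    intro i j hij
    rw [← hp.sum_momentCoeff_two_smul_add_eq_zero hL hn hB hspan hP hij hs hε]
    refine sum_congr rfl fun ν _ => ?_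
    simp only [momentCoeff, Int.cast_mul, Int.cast_pow]
    ring
  refine hmoments.affine (1 / 2) 0 (-intForm u ε / 2) 0 (1 / 2) (-intForm v ε / 2)
    (fun ν => ?_) fun ν => ?_
  · rw [intForm_two_smul_add u]
    push_cast
    ring
  · rw [intForm_two_smul_add v]
    push_cast
    ring

theorem not_auxiliaryFunction_one (hT : 0 < T) (hn : 0 < n) :
    ¬AuxiliaryFunction u v p P 1 T n := by
  intro hp
  obtain ⟨μ, hμ, hpμ⟩ := hp.exists_ne_zero
  have hbox : expBox 1 = {μ} := by
    refine eq_singleton_iff_unique_mem.mpr ⟨hμ, fun ν hν => funext fun i => ?_⟩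
    have := mem_expBox.mp hμ i
    have := mem_expBox.mp hν i
    lia
  have hsum := (hp.momentsVanish 0 hn).sum_eq_zero hT
  rw [hbox, sum_singleton] at hsum
  exact hpμ (mod_cast (mul_eq_zero.mp hsum).resolve_right (exp_pos _).ne')

/-- Halving the exponents and doubling the number of zeros keeps `2 ^ J * n` fixed, so that the
hypotheses are inherited down to `J = 0`. -/
theorem not_auxiliaryFunction_two_pow {J : ℕ} (hn : 1 ≤ n) (hB : 1 ≤ B)
    (hspan : NearlySpanLogForm u v B (exp (-(2199 * (2 ^ J * n)))) (2 ^ J))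
    (hP : (2 ^ J) ^ 3 * (P * B ^ (256 * 2 ^ J)) ≤ exp (26 * (2 ^ J * n))) :
    ¬AuxiliaryFunction u v p P (2 ^ J) (512 * 2 ^ J) n := by
  intro hp
  induction J generalizing n p with
  | zero => exact not_auxiliaryFunction_one (by norm_num) hn hp
  | succ J ih =>
    have hP₀ := hp.bound_nonneg
    have hhalf : (2 : ℝ) ^ J ≤ 2 ^ (J + 1) := pow_le_pow_right₀ one_le_two J.le_succ
    have hprod : (2 : ℝ) ^ J * (2 * n : ℕ) = 2 ^ (J + 1) * n := by push_cast; ring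
    obtain ⟨p', hp'⟩ : ∃ p', AuxiliaryFunction u v p' P (2 ^ J) (512 * 2 ^ J) (2 * n) := by
      simp only [pow_succ' _ J] at hp hspan hP
      rw [show 256 * (2 * 2 ^ J) = 512 * 2 ^ J by ring] at hP
      rw [Nat.mul_left_comm] at hp
      exact hp.exists_halve Nat.one_le_two_pow hn hB (mod_cast hspan) (mod_cast hP)
    refine ih (by lia) ?_ ?_ hp'
    · rw [hprod]
      exact hspan.mono (Nat.pow_le_pow_right two_pos J.le_succ)
    · rw [hprod]
      refine le_trans ?_ hP
      gcongr <;> norm_num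

end Descent

section LinearFormsInLogarithms

open Finset Real

theorem natCast_pow_three_mul_rpow_mul_pow_le {B : ℝ} {L n : ℕ} (hn : 30 ≤ n) (hB₀ : 0 ≤ B)
    (hB : B ≤ exp (n / 16)) :
    L ^ 3 * ((L ^ 3 * (B ^ (512 * L) * exp (5 * L * n))) ^ (1 / 4 : ℝ) * B ^ (256 * L)) ≤
      exp (26 * (L * n)) := by
  have hpow (m : ℕ) : B ^ (m * L) ≤ exp (m / 16 * (L * n)) :=
    calc B ^ (m * L) ≤ exp (n / 16) ^ (m * L) := by gcongr
      _ = exp (m / 16 * (L * n)) := by rw [← exp_nat_mul]; push_cast; ring_nf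
  have hcube : (L : ℝ) ^ 3 ≤ exp (1 / 10 * (L * n)) := by
    have hn' : (30 : ℝ) ≤ n := mod_cast hn
    calc (L : ℝ) ^ 3 ≤ exp L ^ 3 := by gcongr; linarith [add_one_le_exp (L : ℝ)]
      _ = exp (3 * L) := by rw [← exp_nat_mul]; norm_num
      _ ≤ exp (1 / 10 * (L * n)) := exp_le_exp.mpr (by nlinarith [L.cast_nonneg (α := ℝ)])
  calc _ ≤ exp (1 / 10 * (L * n)) * ((exp (1 / 10 * (L * n)) * (exp ((512 : ℕ) / 16 * (L * n)) *
        exp (5 * (L * n)))) ^ (1 / 4 : ℝ) * exp ((256 : ℕ) / 16 * (L * n))) := by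
        rw [mul_assoc 5]
        gcongr
        exacts [hpow 512, hpow 256]
    _ = exp (25.375 * (L * n)) := by
        simp only [← exp_add, ← exp_mul]
        push_cast
        ring_nf
    _ ≤ exp (26 * (L * n)) := by gcongr; norm_num

theorem not_nearlySpanLogForm {u v : Fin 3 → ℤ} {B : ℝ} {J n : ℕ} (hn : 30 ≤ n)
    (hJ : 2621440 * n ≤ 2 ^ J) (hB : 1 ≤ B) (hBn : B ≤ exp (n / 16)) :
    ¬NearlySpanLogForm u v B (exp (-(2199 * (2 ^ J * n)))) (2 ^ J) := by
  intro hspan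
  obtain ⟨p, hp⟩ := exists_auxiliaryFunction (T := 512 * 2 ^ J) (n := n) hB
    (Nat.mul_pos (by norm_num) Nat.one_le_two_pow) (by lia) hspan.abs_left_le hspan.abs_right_le
    (calc _ = 2621440 * n * (2 ^ J) ^ 2 := by ring
      _ ≤ 2 ^ J * (2 ^ J) ^ 2 := Nat.mul_le_mul_right _ hJ
      _ = (2 ^ J) ^ 3 := by ring)
  refine not_auxiliaryFunction_two_pow (by lia) hB hspan ?_ hp
  exact_mod_cast natCast_pow_three_mul_rpow_mul_pow_le (L := 2 ^ J) hn (by linarith) hBn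

/-- The integer form `b q * μ j - b j * μ q`, which vanishes at the coefficient vector `b`. -/
def crossForm (b : Fin 3 → ℤ) (q j : Fin 3) : Fin 3 → ℤ :=
  b q • Pi.single j 1 - b j • Pi.single q 1

theorem intForm_crossForm (b : Fin 3 → ℤ) (q j : Fin 3) (μ : Fin 3 → ℕ) :
    intForm (crossForm b q j) μ = b q * μ j - b j * μ q := by
  simp [intForm, crossForm, sub_mul, sum_sub_distrib, Pi.single_apply]

theorem abs_intForm_crossForm_le {b : Fin 3 → ℤ} {H : ℝ} (hb : ∀ i, |(b i : ℝ)| ≤ H)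
    (q j : Fin 3) {L : ℕ} {μ : Fin 3 → ℕ} (hμ : μ ∈ expBox L) :
    |(intForm (crossForm b q j) μ : ℝ)| ≤ 2 * H * L := by
  have hterm (i k : Fin 3) : |(b i : ℝ) * μ k| ≤ H * L := by
    have hH : 0 ≤ H := (abs_nonneg _).trans (hb i)
    have hk : (μ k : ℝ) ≤ L := mod_cast (mem_expBox.mp hμ k).le
    rw [abs_mul, Nat.abs_cast]
    gcongr
    exact hb i
  rw [intForm_crossForm]
  push_cast
  linarith [abs_sub ((b q : ℝ) * μ j) (b j * μ q), hterm q j, hterm j q]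

theorem logForm_sub_crossForm {b : Fin 3 → ℤ} {q : Fin 3} (hq : b q ≠ 0) (μ : Fin 3 → ℕ) :
    logForm μ - (log (base (q + 1)) / b q * intForm (crossForm b q (q + 1)) μ +
      log (base (q + 2)) / b q * intForm (crossForm b q (q + 2)) μ) =
      μ q * (∑ i, b i * log (base i)) / b q := by
  have hq' : (b q : ℝ) ≠ 0 := mod_cast hq
  have hsum (f : Fin 3 → ℝ) : ∑ i, f i = f q + f (q + 1) + f (q + 2) := by
    rw [← Equiv.sum_comp (Equiv.addLeft q), Fin.sum_univ_three]
    simp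
  rw [logForm, hsum, hsum, intForm_crossForm, intForm_crossForm]
  push_cast
  field_simp
  ring

theorem nearlySpanLogForm_crossForm {b : Fin 3 → ℤ} {q : Fin 3} (hq : b q ≠ 0) {H : ℝ}
    (hb : ∀ i, |(b i : ℝ)| ≤ H) (L : ℕ) :
    NearlySpanLogForm (crossForm b q (q + 1)) (crossForm b q (q + 2)) (2 * H * L)
      (L * |∑ i, b i * log (base i)|) L := by
  refine ⟨fun μ hμ => abs_intForm_crossForm_le hb _ _ hμ,
    fun μ hμ => abs_intForm_crossForm_le hb _ _ hμ,
    log (base (q + 1)) / b q, log (base (q + 2)) / b q, fun μ hμ => ?_⟩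
  have hbq : (1 : ℝ) ≤ |(b q : ℝ)| := mod_cast Int.one_le_abs hq
  have hμq : (μ q : ℝ) ≤ L := mod_cast (mem_expBox.mp hμ q).le
  calc _ = μ q * |∑ i, b i * log (base i)| / |(b q : ℝ)| := by
        rw [logForm_sub_crossForm hq, abs_div, abs_mul, Nat.abs_cast]
    _ ≤ μ q * |∑ i, b i * log (base i)| := div_le_self (by positivity) hbq
    _ ≤ L * |∑ i, b i * log (base i)| := by gcongr

theorem exists_lt_two_pow_le_two_mul {m : ℕ} (hm : m ≠ 0) : ∃ J, m < 2 ^ J ∧ 2 ^ J ≤ 2 * m :=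
  ⟨Nat.log 2 m + 1, Nat.lt_pow_succ_log_self one_lt_two m, by
    rw [pow_succ']
    exact Nat.mul_le_mul_left 2 (Nat.pow_log_le_self 2 hm)⟩

theorem two_mul_exp_mul_le_exp {h r : ℝ} (hh : 35 ≤ h) (hr : r ≤ 5242880 * (28 * h + 1)) :
    2 * exp h * r ≤ exp (7 / 4 * h) := by
  have hexp : (10 : ℝ) ^ 11 ≤ exp 1 ^ 26 :=
    calc (10 : ℝ) ^ 11 ≤ 2.7 ^ 26 := by norm_num
      _ ≤ exp 1 ^ 26 := by gcongr; linarith [exp_one_gt_d9]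
  have hlinear : 10 ^ 11 * (1 + 3 / 4 * (h - 35)) ≤ exp (3 / 4 * h) :=
    calc 10 ^ 11 * (1 + 3 / 4 * (h - 35)) ≤ exp 1 ^ 26 * exp (3 / 4 * (h - 35)) := by
          gcongr
          linarith [add_one_le_exp (3 / 4 * (h - 35))]
      _ = exp (26 + 3 / 4 * (h - 35)) := by rw [← exp_nat_mul, ← exp_add]; norm_num
      _ ≤ exp (3 / 4 * h) := exp_le_exp.mpr (by linarith)
  calc 2 * exp h * r = exp h * (2 * r) := by ring
    _ ≤ exp h * exp (3 / 4 * h) := by gcongr; linarith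
    _ = exp (7 / 4 * h) := by rw [← exp_add]; ring_nf

theorem exp_neg_le_abs_sum_mul_log_base {b : Fin 3 → ℤ} (hb₀ : b ≠ 0) {h : ℝ} (hh : 35 ≤ h)
    (hb : ∀ i, |(b i : ℝ)| ≤ exp h) :
    exp (-(10 ^ 13 * h ^ 2)) ≤ |∑ i, b i * log (base i)| := by
  by_contra! hsmall
  obtain ⟨q, hq⟩ := Function.ne_iff.mp hb₀
  obtain ⟨n, hn, hn'⟩ : ∃ n : ℕ, 28 * h ≤ n ∧ n < 28 * h + 1 :=
    ⟨⌈28 * h⌉₊, Nat.le_ceil _, Nat.ceil_lt_add_one (by linarith)⟩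
  have hn₀ : 980 ≤ n := mod_cast (by linarith : (980 : ℝ) ≤ n)
  obtain ⟨J, hJ, hJ'⟩ := exists_lt_two_pow_le_two_mul (m := 2621440 * n) (by lia)
  have hJr : (2 : ℝ) ^ J ≤ 5242880 * n := mod_cast (by lia : 2 ^ J ≤ 5242880 * n)
  have hJ₁ : (1 : ℝ) ≤ 2 ^ J := one_le_pow₀ one_le_two
  have hB : 1 ≤ 2 * exp h * (2 ^ J : ℕ) := by
    push_cast
    nlinarith [one_le_exp (by linarith : 0 ≤ h)]
  have hBn : 2 * exp h * (2 ^ J : ℕ) ≤ exp (n / 16) := by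
    push_cast
    refine (two_mul_exp_mul_le_exp hh (by linarith)).trans (exp_le_exp.mpr (by linarith))
  have hexponent : 2200 * (2 ^ J * n) ≤ 10 ^ 13 * h ^ 2 :=
    calc 2200 * (2 ^ J * n : ℝ) ≤ 2200 * (5242880 * n * n) := by gcongr
      _ = 2200 * 5242880 * (n : ℝ) ^ 2 := by ring
      _ ≤ 2200 * 5242880 * (28.03 * h) ^ 2 := by gcongr; linarith
      _ ≤ 10 ^ 13 * h ^ 2 := by nlinarith [sq_nonneg h]
  have herror : (2 ^ J : ℕ) * |∑ i, b i * log (base i)| ≤ exp (-(2199 * (2 ^ J * n))) :=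
    calc _ ≤ exp (2 ^ J * n) * exp (-(2200 * (2 ^ J * n))) := by
          have : (2 : ℝ) ^ J ≤ 2 ^ J * n := le_mul_of_one_le_right (by positivity)
            (mod_cast (by lia : 1 ≤ n))
          push_cast
          gcongr
          · linarith [add_one_le_exp (2 ^ J * n : ℝ)]
          · exact hsmall.le.trans (exp_le_exp.mpr (by linarith))
      _ = exp (-(2199 * (2 ^ J * n))) := by rw [← exp_add]; ring_nf
  have hspan := nearlySpanLogForm_crossForm hq hb (2 ^ J)
  obtain ⟨κ₁, κ₂, happrox⟩ := hspan.exists_abs_sub_le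
  exact not_nearlySpanLogForm (by lia) hJ.le hB hBn ⟨hspan.abs_left_le, hspan.abs_right_le, κ₁, κ₂,
    fun μ hμ => (happrox μ hμ).trans herror⟩

end LinearFormsInLogarithms

section Lucas

open Real
open scoped goldenRatio

theorem lucas_pos : ∀ n, 0 < lucas n
  | 0 => by norm_num [lucas]
  | 1 => by norm_num [lucas]
  | n + 2 => by rw [lucas]; exact add_pos (lucas_pos (n + 1)) (lucas_pos n)

theorem strictMono_lucas_succ : StrictMono fun n => lucas (n + 1) :=
  strictMono_nat_of_lt_succ fun n => by
    rw [lucas]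
    exact lt_add_of_pos_right _ (lucas_pos n)

theorem lucas_injective : Function.Injective lucas := by
  have hzero (n : ℕ) : lucas 0 ≠ lucas (n + 1) := by
    match n with
    | 0 => decide
    | n + 1 =>
      have : lucas (1 + 1) ≤ lucas (n + 1 + 1) := strictMono_lucas_succ.monotone (by lia)
      exact ((by decide : lucas 0 < lucas (1 + 1)).trans_le this).ne
  rintro (_ | m) (_ | n) h
  · rfl
  · exact absurd h (hzero n)
  · exact absurd h.symm (hzero m)
  · exact congrArg (· + 1) (strictMono_lucas_succ.injective h)

theorem lucas_eq : ∀ n, (lucas n : ℝ) = φ ^ n + ψ ^ n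
  | 0 => by norm_num [lucas]
  | 1 => by norm_num [lucas]
  | n + 2 => by
    rw [lucas, Int.cast_add, lucas_eq n, lucas_eq (n + 1), pow_add _ n 2, pow_add _ n 2,
      goldenRatio_sq, goldenConj_sq]
    ring

theorem abs_goldenConj_pow_le_one (n : ℕ) : |ψ ^ n| ≤ 1 := by
  rw [abs_pow]
  exact pow_le_one₀ (abs_nonneg _) (abs_le.mpr ⟨neg_one_lt_goldenConj.le, by
    linarith [goldenConj_neg]⟩)

theorem lucas_le_two_mul_goldenRatio_pow (n : ℕ) : lucas n ≤ 2 * φ ^ n := by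
  rw [lucas_eq]
  linarith [(abs_le.mp (abs_goldenConj_pow_le_one n)).2,
    one_le_pow₀ one_lt_goldenRatio.le (n := n)]

theorem goldenRatio_pow_eq_exp (n : ℕ) : φ ^ n = exp (n * log φ) := by
  rw [exp_nat_mul, exp_log goldenRatio_pos]

theorem two_fifths_le_log_goldenRatio : 2 / 5 ≤ log φ := by
  have hpow : exp 2 ≤ φ ^ 5 :=
    calc exp 2 = exp 1 ^ 2 := by rw [← exp_nat_mul]; norm_num
      _ ≤ 2.8 ^ 2 := by gcongr; linarith [exp_one_lt_d9]
      _ ≤ 5 * φ + 3 := by linarith [one_lt_goldenRatio]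
      _ = φ ^ 5 := by linear_combination -(φ ^ 3 + φ ^ 2 + 2 * φ + 3) * goldenRatio_sq
  rw [goldenRatio_pow_eq_exp, exp_le_exp] at hpow
  push_cast at hpow
  linarith

theorem log_goldenRatio_le : log φ ≤ 7 / 10 := by
  linarith [log_le_log goldenRatio_pos goldenRatio_lt_two.le, log_two_lt_d9]

theorem log_two_pow_mul_three_pow (x y : ℕ) : log (2 ^ x * 3 ^ y) = x * log 2 + y * log 3 := by
  rw [log_mul (by positivity) (by positivity), log_pow, log_pow]

theorem exponents_le {x y : ℕ} {R : ℝ} (h : (2 : ℝ) ^ x * 3 ^ y ≤ exp R) :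
    x ≤ 3 / 2 * R ∧ y ≤ 3 / 2 * R := by
  have hlog := log_le_log (by positivity) h
  rw [log_two_pow_mul_three_pow, log_exp] at hlog
  have := log_two_gt_d9
  have : log 2 ≤ log 3 := log_le_log (by norm_num) (by norm_num)
  have := x.cast_nonneg (α := ℝ)
  have := y.cast_nonneg (α := ℝ)
  constructor <;> nlinarith

theorem abs_log_sub_log_le {a b m : ℝ} (hm : 0 < m) (ha : m ≤ a) (hb : m ≤ b) :
    |log a - log b| ≤ |a - b| / m := by
  wlog hab : b ≤ a generalizing a b
  · rw [abs_sub_comm, abs_sub_comm a]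
    exact this hb ha (le_of_not_ge hab)
  have hb₀ : 0 < b := hm.trans_le hb
  have ha₀ : 0 < a := hm.trans_le ha
  rw [abs_of_nonneg (sub_nonneg.mpr hab), abs_of_nonneg (sub_nonneg.mpr (log_le_log hb₀ hab)),
    ← log_div ha₀.ne' hb₀.ne']
  calc log (a / b) ≤ a / b - 1 := log_le_sub_one_of_pos (by positivity)
    _ = (a - b) / b := div_sub_one hb₀.ne'
    _ ≤ (a - b) / m := div_le_div_of_nonneg_left (sub_nonneg.mpr hab) hm hb

theorem four_le_exp_two : 4 ≤ exp 2 :=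
  calc (4 : ℝ) ≤ 2.7 ^ 2 := by norm_num
    _ ≤ exp 1 ^ 2 := by gcongr; linarith [exp_one_gt_d9]
    _ = exp 2 := by rw [← exp_nat_mul]; norm_num

theorem two_mul_le_exp_log_add_one {m : ℝ} (hm : 0 < m) : 2 * m ≤ exp (log m + 1) := by
  rw [exp_add, exp_log hm, mul_comm]
  gcongr
  linarith [exp_one_gt_d9]

theorem le_of_abs_linearForm_le {b : Fin 3 → ℤ} (hb₀ : b ≠ 0) {h w : ℝ} (hh : 35 ≤ h)
    (hb : ∀ i, |(b i : ℝ)| ≤ exp h)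
    (hw : |b 0 * log 2 + b 1 * log 3 + b 2 * log φ| ≤ 4 * exp (-w)) :
    w ≤ 10 ^ 13 * h ^ 2 + 2 := by
  have hlower := exp_neg_le_abs_sum_mul_log_base hb₀ hh hb
  simp only [Fin.sum_univ_three, base, Matrix.cons_val] at hlower
  have hle : exp (-(10 ^ 13 * h ^ 2)) ≤ exp (2 + -w) :=
    calc _ ≤ 4 * exp (-w) := hlower.trans hw
      _ ≤ exp 2 * exp (-w) := by gcongr; exact four_le_exp_two
      _ = exp (2 + -w) := (exp_add ..).symm
  linarith [exp_le_exp.mp hle]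

theorem abs_log_sub_log_le_of_two_solutions {D : ℝ} {n₁ n₂ x₁ x₂ y₁ y₂ : ℕ} (hD : 0 < D)
    (hA₁ : (2 : ℝ) ^ x₁ * 3 ^ y₁ = lucas n₁ + D) (hA₂ : (2 : ℝ) ^ x₂ * 3 ^ y₂ = lucas n₂ + D)
    (hlt : n₂ < n₁) :
    |log (2 ^ x₁ * 3 ^ y₁) - log (2 ^ x₂ * 3 ^ y₂)| ≤ 2 * exp (-(log D - n₁ * log φ)) := by
  have hpos (n : ℕ) : (0 : ℝ) < lucas n := mod_cast lucas_pos n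
  have hle₂ : lucas n₂ ≤ 2 * φ ^ n₁ := (lucas_le_two_mul_goldenRatio_pow n₂).trans
    (by gcongr; exact one_lt_goldenRatio.le)
  rw [hA₁, hA₂]
  calc _ ≤ |lucas n₁ + D - (lucas n₂ + D)| / D :=
        abs_log_sub_log_le hD (by linarith [hpos n₁]) (by linarith [hpos n₂])
    _ ≤ 2 * φ ^ n₁ / D := by
        rw [add_sub_add_right_eq_sub]
        gcongr
        exact abs_sub_le_of_nonneg_of_le (hpos n₁).le (lucas_le_two_mul_goldenRatio_pow n₁)
          (hpos n₂).le hle₂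
    _ = 2 * exp (-(log D - n₁ * log φ)) := by
        rw [neg_sub, exp_sub, ← goldenRatio_pow_eq_exp, exp_log hD, mul_div_assoc]

theorem log_sub_le_of_two_solutions {D m : ℝ} {n₁ n₂ x₁ x₂ y₁ y₂ : ℕ}
    (hA₁ : (2 : ℝ) ^ x₁ * 3 ^ y₁ = lucas n₁ + D) (hA₂ : (2 : ℝ) ^ x₂ * 3 ^ y₂ = lucas n₂ + D)
    (hlt : n₂ < n₁) (hD : φ ^ n₁ ≤ D) (hm : exp 39 ≤ m) (hDm : log D ≤ m) :
    log D - n₁ * log φ ≤ 10 ^ 13 * (log m + 1) ^ 2 + 2 := by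
  have hD₀ : 0 < D := (pow_pos goldenRatio_pos n₁).trans_le hD
  have hm₀ : 0 < m := (exp_pos _).trans_le hm
  have hbound : 3 / 2 * (log D + 2) ≤ exp (log m + 1) := by
    linarith [two_mul_le_exp_log_add_one hm₀, add_one_le_exp (39 : ℝ)]
  have hexponents {k x y : ℕ} (hk : k ≤ n₁) (hA : (2 : ℝ) ^ x * 3 ^ y = lucas k + D) :
      x ≤ exp (log m + 1) ∧ y ≤ exp (log m + 1) := by
    have hφ : φ ^ k ≤ φ ^ n₁ := pow_le_pow_right₀ one_lt_goldenRatio.le hk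
    have hle : (2 : ℝ) ^ x * 3 ^ y ≤ exp (log D + 2) := by
      rw [hA, exp_add, exp_log hD₀]
      nlinarith [lucas_le_two_mul_goldenRatio_pow k, four_le_exp_two]
    exact ⟨(exponents_le hle).1.trans hbound, (exponents_le hle).2.trans hbound⟩
  obtain ⟨hx₁, hy₁⟩ := hexponents le_rfl hA₁
  obtain ⟨hx₂, hy₂⟩ := hexponents hlt.le hA₂
  have hne : ![(x₁ - x₂ : ℤ), (y₁ - y₂ : ℤ), 0] ≠ 0 := by
    intro h
    have hx : (x₁ - x₂ : ℤ) = 0 := congrFun h 0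
    have hy : (y₁ - y₂ : ℤ) = 0 := congrFun h 1
    obtain rfl : x₁ = x₂ := by lia
    obtain rfl : y₁ = y₂ := by lia
    have hlucas : (lucas n₁ : ℝ) = lucas n₂ := add_right_cancel (hA₁.symm.trans hA₂)
    exact hlt.ne' (lucas_injective (mod_cast hlucas))
  refine le_of_abs_linearForm_le hne (by linarith [(le_log_iff_exp_le hm₀).mpr hm]) ?_ ?_
  · simp only [Fin.forall_fin_succ, IsEmpty.forall_iff, and_true, Matrix.cons_val_zero,
      Matrix.cons_val_succ, Int.cast_sub, Int.cast_natCast, Int.cast_zero, abs_zero]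
    exact ⟨abs_sub_le_of_nonneg_of_le x₁.cast_nonneg hx₁ x₂.cast_nonneg hx₂,
      abs_sub_le_of_nonneg_of_le y₁.cast_nonneg hy₁ y₂.cast_nonneg hy₂, (exp_pos _).le⟩
  · have hsmall := abs_log_sub_log_le_of_two_solutions hD₀ hA₁ hA₂ hlt
    rw [log_two_pow_mul_three_pow, log_two_pow_mul_three_pow] at hsmall
    simp only [Matrix.cons_val, Int.cast_sub, Int.cast_natCast, Int.cast_zero]
    rw [show (x₁ - x₂) * log 2 + (y₁ - y₂) * log 3 + 0 * log φ =
      x₁ * log 2 + y₁ * log 3 - (x₂ * log 2 + y₂ * log 3) by ring]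
    linarith [exp_pos (-(log D - n₁ * log φ))]

theorem mul_sq_add_two_lt {l g : ℝ} (hl : 39 ≤ l) (hg : 2 / 5 ≤ g) :
    10 ^ 13 * (l + 1) ^ 2 + 2 < g * (4 * 10 ^ 13 * l ^ 2) :=
  calc _ < 2 / 5 * (4 * 10 ^ 13 * l ^ 2) := by nlinarith
    _ ≤ _ := by gcongr

theorem mul_log_add_one_sq_lt {Z : ℝ} (hZ : exp 39 ≤ Z) :
    10 ^ 13 * (log Z + 1) ^ 2 + 2 < 3 / 10 * Z := by
  have hZ₀ : 0 < Z := (exp_pos _).trans_le hZ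
  obtain ⟨s, hs⟩ : ∃ s, log Z = 39 + s := ⟨log Z - 39, by ring⟩
  have hs₀ : 0 ≤ s := by linarith [(le_log_iff_exp_le hZ₀).mpr hZ]
  have hexp : 8 * 10 ^ 16 ≤ exp 39 :=
    calc (8 * 10 ^ 16 : ℝ) ≤ 2.718 ^ 39 := by norm_num
      _ ≤ exp 1 ^ 39 := by gcongr; linarith [exp_one_gt_d9]
      _ = exp 39 := by rw [← exp_nat_mul]; norm_num
  have hle : 8 * 10 ^ 16 * (1 + s + s ^ 2 / 2) ≤ Z :=
    calc _ ≤ exp 39 * exp s := by gcongr; exact quadratic_le_exp_of_nonneg hs₀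
      _ = Z := by rw [← exp_add, ← hs, exp_log hZ₀]
  rw [hs]
  nlinarith [sq_nonneg s]

theorem abs_le_of_two_solutions {c : ℤ} {m : ℝ} {n₁ n₂ x₁ x₂ y₁ y₂ : ℕ}
    (h₁ : c = lucas n₁ - 2 ^ x₁ * 3 ^ y₁) (h₂ : c = lucas n₂ - 2 ^ x₂ * 3 ^ y₂)
    (hlt : n₂ < n₁) (hm : exp 39 ≤ m) (hn₁ : n₁ ≤ m) :
    |(c : ℝ)| ≤ exp (log φ * (n₁ + 4 * 10 ^ 13 * log m ^ 2)) := by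
  have hm₀ : 0 < m := (exp_pos _).trans_le hm
  have hg := two_fifths_le_log_goldenRatio
  have hgap := mul_sq_add_two_lt ((le_log_iff_exp_le hm₀).mpr hm) hg
  have hgap₂ : 2 < log φ * (4 * 10 ^ 13 * log m ^ 2) := by nlinarith [sq_nonneg (log m + 1)]
  rw [mul_add, mul_comm (log φ) n₁, exp_add, ← goldenRatio_pow_eq_exp]
  have hφ := pow_pos goldenRatio_pos n₁
  rcases le_or_gt 0 c with hc | hc
  · have hcL : c ≤ lucas n₁ := by rw [h₁]; exact sub_le_self _ (by positivity)
    calc |(c : ℝ)| = c := abs_of_nonneg (mod_cast hc)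
      _ ≤ lucas n₁ := mod_cast hcL
      _ ≤ φ ^ n₁ * 2 := (lucas_le_two_mul_goldenRatio_pow n₁).trans_eq (mul_comm ..)
      _ ≤ _ := by gcongr; linarith [add_one_le_exp (log φ * (4 * 10 ^ 13 * log m ^ 2))]
  rw [abs_of_neg (mod_cast hc)]
  by_contra! hlarge
  have hA₁ : (2 : ℝ) ^ x₁ * 3 ^ y₁ = lucas n₁ + -c := by rw [h₁]; push_cast; ring
  have hA₂ : (2 : ℝ) ^ x₂ * 3 ^ y₂ = lucas n₂ + -c := by rw [h₂]; push_cast; ring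
  have hD : φ ^ n₁ ≤ -c :=
    (le_mul_of_one_le_right hφ.le (one_le_exp (by linarith))).trans hlarge.le
  have hlog : n₁ * log φ + log φ * (4 * 10 ^ 13 * log m ^ 2) < log (-c) := by
    rwa [lt_log_iff_exp_lt (hφ.trans_le hD), exp_add, ← goldenRatio_pow_eq_exp]
  rcases le_or_gt (log (-c)) m with hDm | hDm
  · linarith [log_sub_le_of_two_solutions hA₁ hA₂ hlt hD hm hDm]
  · have hle := log_sub_le_of_two_solutions hA₁ hA₂ hlt hD (hm.trans hDm.le) le_rfl
    have hφn : n₁ * log φ ≤ log (-c) * (7 / 10) :=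
      mul_le_mul (hn₁.trans hDm.le) log_goldenRatio_le (by linarith) (by linarith)
    linarith [mul_log_add_one_sq_lt (hm.trans hDm.le)]

theorem abs_two_pow_mul_three_pow_sub_goldenRatio_pow_le {c : ℤ} {n x y : ℕ} {B : ℝ}
    (h : c = lucas n - 2 ^ x * 3 ^ y) (hc : |(c : ℝ)| ≤ B) (hB : 1 ≤ B) :
    |(2 : ℝ) ^ x * 3 ^ y - φ ^ n| ≤ 2 * B := by
  have hA : (2 : ℝ) ^ x * 3 ^ y - φ ^ n = ψ ^ n - c := by
    rw [h, Int.cast_sub, lucas_eq]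
    push_cast
    ring
  calc _ ≤ |ψ ^ n| + |(c : ℝ)| := by rw [hA]; exact abs_sub _ _
    _ ≤ 2 * B := by linarith [abs_goldenConj_pow_le_one n]

theorem le_of_abs_sub_goldenRatio_pow_le {n x y : ℕ} {w : ℝ} (hn : exp 39 ≤ n)
    (h : |(2 : ℝ) ^ x * 3 ^ y - φ ^ n| ≤ 2 * (φ ^ n * exp (-w))) :
    w ≤ 10 ^ 13 * (log n + 1) ^ 2 + 2 := by
  rcases le_or_gt w 2 with hw | hw
  · nlinarith [sq_nonneg (log n + 1)]
  have hn₀ : (0 : ℝ) < n := (exp_pos _).trans_le hn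
  have hφ := pow_pos goldenRatio_pos n
  have hquarter : exp (-w) ≤ 1 / 4 :=
    calc exp (-w) ≤ exp (-2) := by gcongr
      _ ≤ 1 / 4 := by rw [exp_neg, inv_eq_one_div]; gcongr; exact four_le_exp_two
  obtain ⟨hlower, hupper⟩ := abs_le.mp h
  have hlog := log_goldenRatio_le
  obtain ⟨hx, hy⟩ := exponents_le (x := x) (y := y) (R := n * log φ + 2) (by
    rw [exp_add, ← goldenRatio_pow_eq_exp]
    nlinarith [four_le_exp_two])
  have hbound := two_mul_le_exp_log_add_one hn₀
  have hnR : 3 / 2 * (n * log φ + 2) ≤ 2 * n := by nlinarith [add_one_le_exp (39 : ℝ)]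
  refine le_of_abs_linearForm_le (b := ![(x : ℤ), (y : ℤ), -n]) (h := log n + 1) ?_
    (by linarith [(le_log_iff_exp_le hn₀).mpr hn]) ?_ ?_
  · intro hzero
    have hnz : -(n : ℤ) = 0 := congrFun hzero 2
    exact hn₀.ne' (mod_cast neg_eq_zero.mp hnz)
  · simp only [Fin.forall_fin_succ, IsEmpty.forall_iff, and_true, Matrix.cons_val_zero,
      Matrix.cons_val_succ, Int.cast_neg, Int.cast_natCast, abs_neg, Nat.abs_cast]
    exact ⟨by linarith, by linarith, by linarith⟩
  · simp only [Matrix.cons_val, Int.cast_neg, Int.cast_natCast]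
    calc _ = |log (2 ^ x * 3 ^ y) - log (φ ^ n)| := by
          rw [log_two_pow_mul_three_pow, log_pow]; ring_nf
      _ ≤ |(2 : ℝ) ^ x * 3 ^ y - φ ^ n| / (φ ^ n / 2) :=
          abs_log_sub_log_le (by positivity) (by nlinarith) (by linarith)
      _ ≤ 2 * (φ ^ n * exp (-w)) / (φ ^ n / 2) := by gcongr
      _ = 4 * exp (-w) := by field_simp; norm_num

theorem exp_thirtyNine_le {n : ℕ} (hn : 2 ≤ n) (h : 8 * 10 ^ 13 * log n ^ 2 ≤ n) :
    exp 39 ≤ n := by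
  have hn₀ : (0 : ℝ) < n := by positivity
  have hlog {k : ℕ} (hk : (2.72 : ℝ) ^ k ≤ n) : k ≤ log n := by
    rw [le_log_iff_exp_le hn₀]
    calc exp k = exp 1 ^ k := by rw [← exp_nat_mul, mul_one]
      _ ≤ 2.72 ^ k := by gcongr; linarith [exp_one_lt_d9]
      _ ≤ n := hk
  have bootstrap {r : ℝ} {k : ℕ} (hr₀ : 0 ≤ r) (hr : r ≤ log n)
      (hk : (2.72 : ℝ) ^ k ≤ 8 * 10 ^ 13 * r ^ 2) : k ≤ log n :=
    hlog (hk.trans (h.trans' (by gcongr)))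
  have h₀ : 0.69 ≤ log n := by
    have : log 2 ≤ log n := log_le_log two_pos (mod_cast hn)
    linarith [log_two_gt_d9]
  have h₁ := bootstrap (k := 31) (by norm_num) h₀ (by norm_num)
  have h₂ := bootstrap (k := 38) (by positivity) h₁ (by norm_num)
  have h₃ := bootstrap (k := 39) (by positivity) h₂ (by norm_num)
  exact (le_log_iff_exp_le hn₀).mp (mod_cast h₃)

theorem neg_c_gap_n_bound_general (c : ℤ) (n n₁ n₂ x x₁ x₂ y y₁ y₂ : ℕ)
    (h1 : c = lucas n - 2 ^ x * 3 ^ y) (h2 : c = lucas n₁ - 2 ^ x₁ * 3 ^ y₁)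
    (h3 : c = lucas n₂ - 2 ^ x₂ * 3 ^ y₂) (hnn : n₁ < n) (hnn' : n₂ < n₁) :
    (n : ℝ) - n₁ < 8 * 10 ^ 13 * log n ^ 2 := by
  by_contra! hgap
  have hn : exp 39 ≤ n := exp_thirtyNine_le (by lia) (by linarith [n₁.cast_nonneg (α := ℝ)])
  have hg := two_fifths_le_log_goldenRatio
  let w := log φ * (4 * 10 ^ 13 * log n ^ 2)
  let B := exp (log φ * (n₁ + 4 * 10 ^ 13 * log n ^ 2))
  have hc : |(c : ℝ)| ≤ B := abs_le_of_two_solutions h2 h3 hnn' hn (mod_cast hnn.le)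
  have hB : B ≤ φ ^ n * exp (-w) := by
    rw [goldenRatio_pow_eq_exp, ← exp_add, exp_le_exp]
    nlinarith
  have hnear : |(2 : ℝ) ^ x * 3 ^ y - φ ^ n| ≤ 2 * (φ ^ n * exp (-w)) :=
    (abs_two_pow_mul_three_pow_sub_goldenRatio_pow_le h1 hc (one_le_exp (by positivity))).trans
      (by gcongr)
  have hl : 39 ≤ log n := (le_log_iff_exp_le ((exp_pos _).trans_le hn)).mpr hn
  exact (le_of_abs_sub_goldenRatio_pow_le hn hnear).not_gt (mul_sq_add_two_lt hl hg)

end Lucas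

theorem neg_c_gap_n_bound (c : ℤ) (hc : c < 0)
    (n n₁ n₂ x x₁ x₂ y y₁ y₂ : ℕ)
    (h1 : c = lucas n - 2 ^ x * 3 ^ y) (h2 : c = lucas n₁ - 2 ^ x₁ * 3 ^ y₁)
    (h3 : c = lucas n₂ - 2 ^ x₂ * 3 ^ y₂)
    (hnn : n₁ < n) (hnn' : n₂ < n₁) (hn₁ : 500 < n₁) :
    (n : ℝ) - n₁ < 8 * 10 ^ 13 * Real.log n ^ 2 :=
  neg_c_gap_n_bound_general c n n₁ n₂ x x₁ x₂ y y₁ y₂ h1 h2 h3 hnn hnn'
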